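/- arXiv:1803.06402 — 2 statements merged into one kernel-verified Lean document; each statement's English description precedes it below -/
import Mathlib

section
/- Under the hypotheses of the nonautonomous shadowing theorem with the additional assumption that the system is $N$-periodic ($F_{n+N}=F_n$ for all $n$), there exists $L>0$ such that for all sufficiently small $\varepsilon>0$: every $N$-periodic sequence $(y_n)_{n\in\mathbb{Z}}$ (i.e. $y_{n+N}=y_n$) with $\sup_n\|y_{n+1}-F_n(y_n)\|\le L\varepsilon$ is $\varepsilon$-shadowed by an $N$-periodic true trajectory: there exists $(x_n)$ with $x_{n+1}=F_n(x_n)$, $x_{n+N}=x_n$ for all $n$, and $\sup_n\|x_n-y_n\|\le\varepsilon$. -/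
/-- The sequence `A` of bounded operators admits an exponential dichotomy: there exist
an evolution family `E`, projections `P` commuting with the dynamics and constants
`C, lam > 0` with the usual exponential bounds. -/
def ExpDichotomy {X : Type*} [NormedAddCommGroup X] [NormedSpace ℝ X]
    (A : ℤ → X →L[ℝ] X) : Prop :=
  ∃ (E : ℤ → ℤ → X →L[ℝ] X) (P : ℤ → X →L[ℝ] X) (C lam : ℝ),
    0 < C ∧ 0 < lam ∧
    (∀ n, E n n = ContinuousLinearMap.id ℝ X) ∧
    (∀ m n, E (m + 1) n = (A m).comp (E m n)) ∧
    (∀ m, (P m).comp (P m) = P m) ∧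
    (∀ m, (P (m + 1)).comp (A m) = (A m).comp (P m)) ∧
    (∀ m n, n ≤ m → ‖(E m n).comp (P n)‖ ≤ C * Real.exp (-lam * ((m - n : ℤ) : ℝ))) ∧
    (∀ m n, m ≤ n → ‖(E m n).comp (ContinuousLinearMap.id ℝ X - P n)‖ ≤
      C * Real.exp (-lam * ((n - m : ℤ) : ℝ)))

theorem ExpDichotomy.exists_mul_eq_one {X : Type*} [NormedAddCommGroup X] [NormedSpace ℝ X]
    {B : ℤ → X →L[ℝ] X} (h : ExpDichotomy B) (m : ℤ) : ∃ R : X →L[ℝ] X, B m * R = 1 := by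
  obtain ⟨E, P, C, lam, -, -, hid, hE, -⟩ := h
  refine ⟨E m (m + 1), ?_⟩
  have := hE m (m + 1)
  rw [hid] at this
  exact this.symm

/-- On a segment of right-invertible elements, invertibility propagates from one endpoint
to the other. -/
theorem isUnit_of_segment_right_inverse {R : Type*} [NormedRing R] [NormedAlgebra ℝ R]
    [CompleteSpace R] {a b : R} (ha : IsUnit a)
    (h : ∀ t : unitInterval, ∃ s : R, (a + (t : ℝ) • (b - a)) * s = 1) : IsUnit b := by
  let γ : unitInterval → R := fun t => a + (t : ℝ) • (b - a)
  have hγ : Continuous γ := by fun_prop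
  let S : Set unitInterval := {t | IsUnit (γ t)}
  have hopen : IsOpen S := Units.isOpen.preimage hγ
  have hclosed : IsClosed S := by
    refine isClosed_of_closure_subset fun t ht => ?_
    obtain ⟨s, hs⟩ := h t
    have hU : IsOpen {t' : unitInterval | IsUnit (γ t' * s)} :=
      Units.isOpen.preimage (hγ.mul continuous_const)
    have htU : t ∈ {t' : unitInterval | IsUnit (γ t' * s)} := by
      change IsUnit (γ t * s)
      rw [show γ t * s = 1 from hs]
      exact isUnit_one
    obtain ⟨t', ht', ht'S⟩ := mem_closure_iff.1 ht _ hU htU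
    have hsu : IsUnit s := by
      obtain ⟨u, hu⟩ := (show IsUnit (γ t') from ht'S)
      have h1 : IsUnit (γ t' * s) := ht'
      rw [← hu] at h1
      simpa using (u⁻¹).isUnit.mul h1
    obtain ⟨v, rfl⟩ := hsu
    change IsUnit (γ t)
    have h2 : γ t * v = 1 := hs
    rw [Units.mul_eq_one_iff_eq_inv] at h2
    rw [h2]
    exact (v⁻¹).isUnit
  have huniv : S = Set.univ := by
    refine IsClopen.eq_univ ⟨hclosed, hopen⟩ ⟨0, ?_⟩
    change IsUnit (γ 0)
    simpa [γ] using ha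
  have h1 : (1 : unitInterval) ∈ S := huniv ▸ Set.mem_univ _
  have h2 : IsUnit (γ 1) := h1
  simpa [γ] using h2

theorem injective_of_robust {X : Type*} [NormedAddCommGroup X] [NormedSpace ℝ X]
    [CompleteSpace X] (A : ℤ → X ≃L[ℝ] X) {c : ℝ}
    (hrobust : ∀ B : ℤ → X →L[ℝ] X,
      (∀ m, ‖(A m : X →L[ℝ] X) - B m‖ ≤ c) → ExpDichotomy B)
    {B : ℤ → X →L[ℝ] X} (hB : ∀ m, ‖(A m : X →L[ℝ] X) - B m‖ ≤ c) (m : ℤ) :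
    Function.Injective (B m) := by
  have hA : IsUnit (A m : X →L[ℝ] X) := (ContinuousLinearEquiv.toUnit (A m)).isUnit
  have hu : IsUnit (B m) := by
    refine isUnit_of_segment_right_inverse hA fun t => ?_
    refine (hrobust (fun n => (A n : X →L[ℝ] X) + (t : ℝ) • (B n - A n))
      fun n => ?_).exists_mul_eq_one m
    rw [sub_add_cancel_left, norm_neg, norm_smul, norm_sub_rev, Real.norm_eq_abs,
      abs_of_nonneg t.2.1]
    exact (mul_le_of_le_one_left (norm_nonneg _) t.2.2).trans (hB n)
  obtain ⟨u, hu⟩ := hu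
  refine Function.LeftInverse.injective (g := (↑u⁻¹ : X →L[ℝ] X)) fun x => ?_
  have h1 : (↑u⁻¹ : X →L[ℝ] X) * ↑u = 1 := u.inv_mul
  rw [← hu]
  exact congrArg (fun T : X →L[ℝ] X => T x) h1

theorem tendsto_const_mul_exp_neg_mul_nat (K lam : ℝ) (hlam : 0 < lam) :
    Filter.Tendsto (fun i : ℕ => K * Real.exp (-lam * i)) Filter.atTop (nhds 0) := by
  have h1 : Filter.Tendsto (fun i : ℕ => lam * (i : ℝ)) Filter.atTop Filter.atTop :=
    tendsto_natCast_atTop_atTop.const_mul_atTop hlam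
  have h2 := (Real.tendsto_exp_neg_atTop_nhds_zero.comp h1).const_mul K
  simpa [Function.comp_def] using h2

theorem ExpDichotomy.eq_zero_of_bounded {X : Type*} [NormedAddCommGroup X] [NormedSpace ℝ X]
    {B : ℤ → X →L[ℝ] X} (h : ExpDichotomy B) (hinj : ∀ m, Function.Injective (B m))
    {x : ℤ → X} {S : ℝ} (hS : ∀ n, ‖x n‖ ≤ S) (hx : ∀ n, x (n + 1) = B n (x n)) (n : ℤ) :
    x n = 0 := by
  obtain ⟨E, P, C, lam, hC, hlam, hid, hE, -, hP, hs, hu⟩ := h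
  have hS0 : 0 ≤ S := (norm_nonneg _).trans (hS 0)
  have fwd : ∀ (m : ℤ) (i : ℕ), P (m + i) (x (m + i)) = E (m + i) m (P m (x m)) := by
    intro m i
    induction i with
    | zero => simp [hid]
    | succ i ih =>
      have e : m + ((i + 1 : ℕ) : ℤ) = (m + i) + 1 := by push_cast; ring
      rw [e, hx, hE]
      have := congrArg (fun T : X →L[ℝ] X => T (x (m + i))) (hP (m + i))
      simp only [ContinuousLinearMap.comp_apply] at this ⊢
      rw [this, ih]
  have bwd : ∀ (m : ℤ) (i : ℕ), E (m - i) m (x m) = x (m - i) := by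
    intro m i
    induction i with
    | zero => simp [hid]
    | succ i ih =>
      apply hinj (m - ((i + 1 : ℕ) : ℤ))
      rw [← hx, ← ContinuousLinearMap.comp_apply, ← hE]
      have e : m - ((i + 1 : ℕ) : ℤ) + 1 = m - i := by push_cast; ring
      rw [e, ih]
  have hPx : ∀ m, P m (x m) = 0 := by
    intro m
    rw [← norm_le_zero_iff]
    refine ge_of_tendsto' (tendsto_const_mul_exp_neg_mul_nat (C * S) lam hlam) fun i => ?_
    have h1 := fwd (m - i) i
    rw [sub_add_cancel] at h1
    rw [h1]
    have h2 := hs m (m - i) (by omega)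
    have h3 := ((E m (m - i)).comp (P (m - i))).le_of_opNorm_le h2 (x (m - i))
    have e : ((m - (m - i) : ℤ) : ℝ) = i := by push_cast; ring
    rw [e] at h3
    calc _ ≤ _ := h3
      _ ≤ C * Real.exp (-lam * i) * S := by gcongr; exact hS _
      _ = _ := by ring
  rw [← norm_le_zero_iff]
  refine ge_of_tendsto' (tendsto_const_mul_exp_neg_mul_nat (C * S) lam hlam) fun i => ?_
  have h1 := bwd (n + i) i
  rw [add_sub_cancel_right] at h1
  have h2 := hu n (n + i) (by omega)
  have h3 := ((E n (n + i)).comp (ContinuousLinearMap.id ℝ X - P (n + i))).le_of_opNorm_le h2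
    (x (n + i))
  have e : ((n + i - n : ℤ) : ℝ) = i := by push_cast; ring
  simp only [ContinuousLinearMap.comp_apply, sub_apply,
    ContinuousLinearMap.id_apply, hPx, sub_zero, h1, e] at h3
  calc _ ≤ _ := h3
    _ ≤ C * Real.exp (-lam * i) * S := by gcongr; exact hS _
    _ = _ := by ring

theorem summable_exp_neg_mul_abs_int {lam : ℝ} (hlam : 0 < lam) :
    Summable fun k : ℤ => Real.exp (-lam * |(k : ℝ)|) := by
  have h : Summable fun i : ℕ => Real.exp (-lam * i) := by
    have := Real.summable_exp_nat_mul_iff.2 (neg_lt_zero.2 hlam)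
    simpa [mul_comm] using this
  exact Summable.of_nat_of_neg (by simpa using h) (by simpa using h)

/-- The inhomogeneous equation is solved by summing against the Green function. -/
theorem ExpDichotomy.exists_bounded_solution {X : Type*} [NormedAddCommGroup X]
    [NormedSpace ℝ X] [CompleteSpace X] {B : ℤ → X →L[ℝ] X} (h : ExpDichotomy B) :
    ∃ K : ℝ, ∀ (z : ℤ → X) (δ : ℝ), (∀ n, ‖z n‖ ≤ δ) →
      ∃ x : ℤ → X, (∀ n, ‖x n‖ ≤ K * δ) ∧ ∀ n, x (n + 1) - B n (x n) = z n := by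
  obtain ⟨E, P, C, lam, hC, hlam, hid, hE, -, hP, hs, hu⟩ := h
  let G : ℤ → ℤ → X →L[ℝ] X := fun n k =>
    if k ≤ n then (E n k).comp (P k) else -(E n k).comp (ContinuousLinearMap.id ℝ X - P k)
  have hG : ∀ n k, ‖G n k‖ ≤ C * Real.exp (-lam * |((k - n : ℤ) : ℝ)|) := by
    intro n k
    by_cases hk : k ≤ n
    · have h1 : |((k - n : ℤ) : ℝ)| = ((n - k : ℤ) : ℝ) := by
        rw [abs_of_nonpos (by exact_mod_cast (by omega : k - n ≤ 0))]
        push_cast; ring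
      simpa only [G, if_pos hk, h1] using hs n k hk
    · have h1 : |((k - n : ℤ) : ℝ)| = ((k - n : ℤ) : ℝ) :=
        abs_of_nonneg (by exact_mod_cast (by omega : 0 ≤ k - n))
      simpa only [G, if_neg hk, h1, norm_neg] using hu n k (by omega)
  have hsum : ∀ n : ℤ, Summable fun k : ℤ => Real.exp (-lam * |((k - n : ℤ) : ℝ)|) := fun n =>
    (Equiv.subRight n).summable_iff.2 (summable_exp_neg_mul_abs_int hlam)
  have htsum : ∀ n : ℤ, ∑' k : ℤ, Real.exp (-lam * |((k - n : ℤ) : ℝ)|) =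
      ∑' k : ℤ, Real.exp (-lam * |(k : ℝ)|) := fun n =>
    (Equiv.subRight n).tsum_eq fun k : ℤ => Real.exp (-lam * |(k : ℝ)|)
  refine ⟨C * ∑' k : ℤ, Real.exp (-lam * |(k : ℝ)|), fun z δ hz => ?_⟩
  have hterm : ∀ n k, ‖G n k (z (k - 1))‖ ≤ C * δ * Real.exp (-lam * |((k - n : ℤ) : ℝ)|) := by
    intro n k
    calc _ ≤ _ := (G n k).le_of_opNorm_le (hG n k) _
      _ ≤ C * Real.exp (-lam * |((k - n : ℤ) : ℝ)|) * δ := by gcongr; exact hz _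
      _ = _ := by ring
  have hsm : ∀ n, Summable fun k => G n k (z (k - 1)) := fun n =>
    Summable.of_norm_bounded ((hsum n).mul_left (C * δ)) (hterm n)
  refine ⟨fun n => ∑' k, G n k (z (k - 1)), fun n => ?_, fun n => ?_⟩
  · refine (tsum_of_norm_bounded ((hsum n).mul_left (C * δ)).hasSum (hterm n)).trans_eq ?_
    rw [tsum_mul_left, htsum]
    ring
  · rw [(B n).map_tsum (hsm n), ← (hsm (n + 1)).tsum_sub ((B n).summable (hsm n)),
      tsum_eq_single (n + 1)]
    · have h1 : E (n + 1) (n + 1) = (B n).comp (E n (n + 1)) := hE n (n + 1)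
      have h2 := congrArg (fun T : X →L[ℝ] X => T (z n - P (n + 1) (z n))) h1
      simp only [hid, ContinuousLinearMap.comp_apply, ContinuousLinearMap.id_apply] at h2
      simp only [map_sub] at h2
      simp [G, hid]
      rw [← neg_sub (B n (E n (n + 1) (z n))), ← h2]
      abel
    · intro k hk
      have h1 : G (n + 1) k = (B n).comp (G n k) := by
        by_cases hkn : k ≤ n
        · simp only [G, if_pos hkn, if_pos (by omega : k ≤ n + 1)]
          rw [hE]; rfl
        · simp only [G, if_neg hkn, if_neg (by omega : ¬ k ≤ n + 1)]
          rw [hE, ContinuousLinearMap.comp_neg]; rfl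
      rw [h1]
      simp

theorem ExpDichotomy.exists_apriori_bound {X : Type*} [NormedAddCommGroup X]
    [NormedSpace ℝ X] [CompleteSpace X] {B : ℤ → X →L[ℝ] X} (h : ExpDichotomy B)
    (hinj : ∀ m, Function.Injective (B m)) :
    ∃ K : ℝ, ∀ (x : ℤ → X) (S δ : ℝ), (∀ n, ‖x n‖ ≤ S) →
      (∀ n, ‖x (n + 1) - B n (x n)‖ ≤ δ) → ∀ n, ‖x n‖ ≤ K * δ := by
  obtain ⟨K, hK⟩ := h.exists_bounded_solution
  refine ⟨K, fun x S δ hS hδ n => ?_⟩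
  obtain ⟨w, hw, hwB⟩ := hK _ δ hδ
  have h0 := h.eq_zero_of_bounded hinj (x := fun n => x n - w n) (S := S + K * δ)
    (fun n => (norm_sub_le _ _).trans (add_le_add (hS n) (hw n))) (fun n => by
      have := hwB n
      rw [map_sub, sub_eq_sub_iff_sub_eq_sub, ← this]) n
  rw [sub_eq_zero.1 h0]
  exact hw n

/-- Multiplying an almost-solution by a tent function centred where it is almost maximal gives
a finitely supported almost-solution. -/
theorem exists_finite_support_almost_solution {X : Type*} [NormedAddCommGroup X]
    [NormedSpace ℝ X] {B : ℤ → X →L[ℝ] X} {b : ℝ} (hb : ∀ m, ‖B m‖ ≤ b) {k : ℝ} (hk : 0 < k)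
    {x : ℤ → X} {S δ : ℝ} (hS : ∀ n, ‖x n‖ ≤ S) (hδ : ∀ n, ‖x (n + 1) - B n (x n)‖ ≤ δ)
    {p : ℤ} (hp : k * δ < ‖x p‖) :
    ∃ (n : ℤ) (u : ℤ → X), 1 / 2 ≤ ‖u n‖ ∧ (∀ j, ‖u j‖ ≤ 1) ∧
      (∀ j : ℤ, k ≤ |((j - n : ℤ) : ℝ)| → u j = 0) ∧
      ∀ j, ‖u (j + 1) - B j (u j)‖ ≤ (1 + b) / k := by
  have hδ0 : 0 ≤ δ := (norm_nonneg _).trans (hδ 0)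
  have hbdd : BddAbove (Set.range fun n => ‖x n‖) := ⟨S, by rintro _ ⟨n, rfl⟩; exact hS n⟩
  set s := ⨆ n, ‖x n‖ with hs
  have hxs : ∀ n, ‖x n‖ ≤ s := fun n => le_ciSup hbdd n
  have hks : k * δ < s := hp.trans_le (hxs p)
  have hs0 : 0 < s := lt_of_le_of_lt (by positivity) hks
  obtain ⟨n, hn⟩ := exists_lt_of_lt_ciSup (show s / 2 < ⨆ n, ‖x n‖ by rw [← hs]; linarith)
  let φ : ℤ → ℝ := fun j => max (1 - |((j - n : ℤ) : ℝ)| / k) 0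
  have hφ0 : ∀ j, 0 ≤ φ j := fun j => le_max_right _ _
  have hφ1 : ∀ j, φ j ≤ 1 := fun j => max_le (by
    have : 0 ≤ |((j - n : ℤ) : ℝ)| / k := by positivity
    linarith) zero_le_one
  have hφd : ∀ j, |φ (j + 1) - φ j| ≤ 1 / k := by
    intro j
    refine (abs_max_sub_max_le_abs _ _ _).trans ?_
    rw [sub_sub_sub_cancel_left, ← sub_div, abs_div, abs_of_pos hk]
    gcongr
    refine (abs_abs_sub_abs_le _ _).trans_eq ?_
    push_cast
    rw [sub_sub_sub_cancel_right, sub_add_cancel_left, abs_neg, abs_one]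
  refine ⟨n, fun j => (φ j / s) • x j, ?_, fun j => ?_, fun j hj => ?_, fun j => ?_⟩
  · have : φ n = 1 := by simp [φ]
    beta_reduce
    rw [this, norm_smul, Real.norm_of_nonneg (by positivity), one_div_mul_eq_div,
      le_div_iff₀ hs0]
    linarith
  · rw [norm_smul, Real.norm_of_nonneg (div_nonneg (hφ0 j) hs0.le), div_mul_eq_mul_div,
      div_le_one hs0]
    exact (mul_le_of_le_one_left (norm_nonneg _) (hφ1 j)).trans (hxs j)
  · have : φ j = 0 := max_eq_right (by
      rw [sub_nonpos, le_div_iff₀ hk]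
      linarith)
    simp [this]
  · have e : (φ (j + 1) / s) • x (j + 1) - B j ((φ j / s) • x j) =
        (1 / s) • (φ (j + 1) • (x (j + 1) - B j (x j)) + (φ (j + 1) - φ j) • B j (x j)) := by
      rw [map_smul]
      module
    have h1 : ‖φ (j + 1) • (x (j + 1) - B j (x j))‖ ≤ s / k := by
      rw [norm_smul, Real.norm_of_nonneg (hφ0 _), le_div_iff₀ hk]
      have := mul_le_of_le_one_left (norm_nonneg (x (j + 1) - B j (x j))) (hφ1 (j + 1))
      nlinarith [hδ j]
    have h2 : ‖(φ (j + 1) - φ j) • B j (x j)‖ ≤ 1 / k * (b * s) := by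
      rw [norm_smul, Real.norm_eq_abs]
      have h3 : ‖B j (x j)‖ ≤ b * s :=
        ((B j).le_of_opNorm_le (hb j) _).trans
          (mul_le_mul_of_nonneg_left (hxs j) ((norm_nonneg _).trans (hb j)))
      exact mul_le_mul (hφd j) h3 (norm_nonneg _) (by positivity)
    rw [e, norm_smul, Real.norm_of_nonneg (by positivity), one_div_mul_eq_div, div_le_iff₀ hs0]
    refine (norm_add_le _ _).trans ((add_le_add h1 h2).trans_eq ?_)
    field_simp

/-- For a periodic system, the a priori bound is uniform over all small perturbations: a
sequence of counterexamples could be cut off, translated and glued to a single perturbation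
without exponential dichotomy. -/
theorem exists_uniform_apriori_bound {X : Type*} [NormedAddCommGroup X] [NormedSpace ℝ X]
    [CompleteSpace X] (A : ℤ → X ≃L[ℝ] X) {M : ℝ} (hM : ∀ m, ‖(A m : X →L[ℝ] X)‖ ≤ M) {c : ℝ}
    (hrobust : ∀ B : ℤ → X →L[ℝ] X,
      (∀ m, ‖(A m : X →L[ℝ] X) - B m‖ ≤ c) → ExpDichotomy B)
    {N : ℕ} (hN : 0 < N) (hA : ∀ m, A (m + N) = A m) :
    ∃ K : ℝ, ∀ B : ℤ → X →L[ℝ] X, (∀ m, ‖(A m : X →L[ℝ] X) - B m‖ ≤ c) →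
      ∀ (x : ℤ → X) (S δ : ℝ), (∀ n, ‖x n‖ ≤ S) →
        (∀ n, ‖x (n + 1) - B n (x n)‖ ≤ δ) → ∀ n, ‖x n‖ ≤ K * δ := by
  by_contra! hcon
  have hAp : ∀ m i : ℤ, A (m + N * i) = A m := fun m i => by
    have : Function.Periodic A (N : ℤ) := hA
    simpa [mul_comm] using this.int_mul i m
  have hbad : ∀ k : ℕ, ∃ (B : ℤ → X →L[ℝ] X) (n : ℤ) (u : ℤ → X),
      (∀ m, ‖(A m : X →L[ℝ] X) - B m‖ ≤ c) ∧
      ((k + N) * (k + N) + k + 1 : ℤ) ≤ n ∧ n ≤ (k + N) * (k + N) + k + N ∧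
      1 / 2 ≤ ‖u n‖ ∧ (∀ j, ‖u j‖ ≤ 1) ∧ (∀ j : ℤ, (k + 1 : ℤ) ≤ |j - n| → u j = 0) ∧
      ∀ j, ‖u (j + 1) - B j (u j)‖ ≤ (1 + (M + c)) / (k + 1 : ℝ) := by
    intro k
    obtain ⟨B, hB, x, S, δ, hS, hδ, p, hp⟩ := hcon (k + 1)
    have hb : ∀ m, ‖B m‖ ≤ M + c := fun m => by
      have := norm_sub_le (A m : X →L[ℝ] X) ((A m : X →L[ℝ] X) - B m)
      rw [sub_sub_cancel] at this
      exact this.trans (add_le_add (hM m) (hB m))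
    obtain ⟨n, u, hu1, hu2, hu3, hu4⟩ :=
      exists_finite_support_almost_solution hb (by positivity : (0 : ℝ) < k + 1) hS hδ hp
    set a : ℤ := (k + N) * (k + N) + k + 1
    have hN' : (0 : ℤ) < N := by exact_mod_cast hN
    have hdiv := Int.emod_add_mul_ediv (n - a) N
    have hmod0 := Int.emod_nonneg (n - a) hN'.ne'
    have hmod1 := Int.emod_lt_of_pos (n - a) hN'
    set i := (n - a) / N
    refine ⟨fun j => B (j + N * i), n - N * i, fun j => u (j + N * i), fun m => ?_, by omega,
      by omega, by simpa using hu1, fun j => hu2 _, fun j hj => hu3 _ ?_, fun j => ?_⟩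
    · rw [← hAp m i]
      exact hB _
    · have e : j + N * i - n = j - (n - N * i) := by ring
      rw [e]
      exact_mod_cast hj
    · have := hu4 (j + N * i)
      rwa [add_right_comm] at this
  choose B n u hB hn1 hn2 hu1 hu2 hu3 hu4 using hbad
  let B' : ℤ → X →L[ℝ] X := fun j => B (Nat.sqrt j.toNat - N) j
  have hB' : ∀ m, ‖(A m : X →L[ℝ] X) - B' m‖ ≤ c := fun m => hB _ m
  obtain ⟨K, hK⟩ := (hrobust B' hB').exists_apriori_bound (injective_of_robust A hrobust hB')
  have hfin : ∀ k : ℕ, 1 / 2 ≤ K * ((1 + (M + c)) / (k + 1 : ℝ)) := by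
    intro k
    refine (hu1 k).trans (hK (u k) 1 _ (hu2 k) (fun j => ?_) _)
    have hnn : 0 ≤ (1 + (M + c)) / (k + 1 : ℝ) := (norm_nonneg _).trans (hu4 k 0)
    by_cases hj : |j - n k| ≤ k ∨ |j + 1 - n k| ≤ k
    · have e : B' j = B k j := by
        have hj1 : ((k + N) * (k + N) : ℤ) ≤ j := by
          have := hn1 k
          rw [abs_le, abs_le] at hj
          omega
        obtain ⟨t, ht⟩ := Int.eq_ofNat_of_zero_le (sub_nonneg.2 hj1)
        have ht2 : t ≤ (k + N) + (k + N) := by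
          have := hn2 k
          rw [abs_le, abs_le] at hj
          omega
        have e1 : j.toNat = (k + N) * (k + N) + t := by
          rw [sub_eq_iff_eq_add'.1 ht]
          norm_cast
        simp only [B']
        rw [e1, Nat.sqrt_add_eq _ ht2, Nat.add_sub_cancel]
      rw [e]
      exact hu4 k j
    · push Not at hj
      rw [hu3 k j (by omega), hu3 k (j + 1) (by omega)]
      simpa using hnn
  have hlim : Filter.Tendsto (fun k : ℕ => K * ((1 + (M + c)) / (k + 1 : ℝ)))
      Filter.atTop (nhds 0) := by
    have := (tendsto_one_div_add_atTop_nhds_zero_nat (𝕜 := ℝ)).const_mul (K * (1 + (M + c)))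
    simpa [mul_div_assoc, div_eq_mul_inv, mul_assoc] using this
  have := ge_of_tendsto' hlim hfin
  norm_num at this

theorem ContinuousLinearMap.eq_zero_of_norm_apply_le {X : Type*} [NormedAddCommGroup X]
    [NormedSpace ℝ X] {T : X →L[ℝ] X} {S : ℝ} (h : ∀ x, ‖T x‖ ≤ S) : T = 0 := by
  ext x
  by_contra hx
  have hpos : 0 < ‖T x‖ := norm_pos_iff.2 hx
  obtain ⟨k, hk⟩ := exists_nat_gt (S / ‖T x‖)
  rw [div_lt_iff₀ hpos] at hk
  have := h ((k : ℝ) • x)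
  rw [map_smul, norm_smul, Real.norm_natCast] at this
  linarith

theorem eq_zero_of_norm_le_half {ι X : Type*} [NormedAddCommGroup X] {v : ι → X} {S : ℝ}
    (hS : ∀ n, ‖v n‖ ≤ S) (h : ∀ δ, (∀ n, ‖v n‖ ≤ δ) → ∀ n, ‖v n‖ ≤ δ / 2) (n : ι) :
    v n = 0 := by
  have hk : ∀ (k : ℕ) (n : ι), ‖v n‖ ≤ S * (1 / 2) ^ k := by
    intro k
    induction k with
    | zero => simpa using hS
    | succ k ih =>
      intro n
      refine (h _ ih n).trans_eq ?_
      rw [pow_succ]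
      ring
  rw [← norm_le_zero_iff]
  have hlim := (tendsto_pow_atTop_nhds_zero_of_lt_one (by norm_num : (0 : ℝ) ≤ 1 / 2)
    (by norm_num)).const_mul S
  rw [mul_zero] at hlim
  exact ge_of_tendsto' hlim fun k => hk k n

theorem norm_sub_sub_fderiv_le {X : Type*} [NormedAddCommGroup X] [NormedSpace ℝ X]
    {f : X → X} {f' : X → X →L[ℝ] X} (hdf : ∀ x, HasFDerivAt f (f' x) x) {D r : ℝ} (hD : 0 ≤ D)
    (hr : 0 ≤ r) (hHolder : ∀ x y, ‖f' x - f' y‖ ≤ D * ‖x - y‖ ^ r) {y a b : X} {ε : ℝ}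
    (ha : ‖a‖ ≤ ε) (hb : ‖b‖ ≤ ε) :
    ‖f (y + a) - f (y + b) - f' y (a - b)‖ ≤ D * ε ^ r * ‖a - b‖ := by
  have h := (convex_closedBall y ε).norm_image_sub_le_of_norm_hasFDerivWithin_le'
    (fun x _ => (hdf x).hasFDerivWithinAt) (φ := f' y) (C := D * ε ^ r)
    (fun x hx => (hHolder x y).trans (by
      rw [mem_closedBall_iff_norm] at hx
      gcongr))
    (x := y + b) (y := y + a) (by simpa using hb) (by simpa using ha)
  simpa using h

/-- Anosov closing lemma for periodic nonautonomous systems: `N`-periodic pseudotrajectories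
are shadowed by `N`-periodic true trajectories. -/
theorem periodic_shadowing {X : Type*} [NormedAddCommGroup X]
    [NormedSpace ℝ X] [CompleteSpace X]
    (A : ℤ → X ≃L[ℝ] X) (M : ℝ) (hM : ∀ m, ‖(A m : X →L[ℝ] X)‖ ≤ M)
    (hED : ExpDichotomy fun m => (A m : X →L[ℝ] X))
    (c : ℝ) (hc : 0 < c)
    (hrobust : ∀ B : ℤ → X →L[ℝ] X,
      (∀ m, ‖(A m : X →L[ℝ] X) - B m‖ ≤ c) → ExpDichotomy B)
    (f : ℤ → X → X) (f' : ℤ → X → X →L[ℝ] X)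
    (hdf : ∀ n x, HasFDerivAt (f n) (f' n x) x)
    (hfc : ∀ n x, ‖f' n x‖ ≤ c)
    (Mf : ℝ) (hMf : ∀ n x, ‖f n x‖ ≤ Mf)
    (D r : ℝ) (hD : 0 < D) (hr : 0 < r)
    (hHolder : ∀ n x y, ‖f' n x - f' n y‖ ≤ D * ‖x - y‖ ^ r)
    (N : ℕ) (hN : 0 < N)
    (hper : ∀ (n : ℤ) (x : X), A (n + N) x + f (n + N) x = A n x + f n x) :
    ∃ L > (0 : ℝ), ∃ ε₀ > (0 : ℝ), ∀ ε : ℝ, 0 < ε → ε ≤ ε₀ →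
      ∀ y : ℤ → X, (∀ n, y (n + N) = y n) →
        (∀ n, ‖y (n + 1) - (A n (y n) + f n (y n))‖ ≤ L * ε) →
        ∃ x : ℤ → X, (∀ n, x (n + 1) = A n (x n) + f n (x n)) ∧
          (∀ n, x (n + N) = x n) ∧ ∀ n, ‖x n - y n‖ ≤ ε := by
  have hA : ∀ m, A (m + N) = A m := by
    intro m
    have h0 : (A (m + N) : X →L[ℝ] X) - A m = 0 :=
      ContinuousLinearMap.eq_zero_of_norm_apply_le (S := Mf + Mf) fun x => by
        have e : ((A (m + N) : X →L[ℝ] X) - A m) x = f m x - f (m + N) x := by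
          have := hper m x
          simp only [sub_apply, ContinuousLinearEquiv.coe_coe]
          rw [sub_eq_sub_iff_add_eq_add, this, add_comm]
        rw [e]
        exact (norm_sub_le _ _).trans (add_le_add (hMf _ _) (hMf _ _))
    exact ContinuousLinearEquiv.coe_injective (sub_eq_zero.1 h0)
  have hf : ∀ m x, f (m + N) x = f m x := fun m x => by
    have := hper m x
    rwa [hA, add_right_inj] at this
  obtain ⟨K₀, hK₀⟩ := exists_uniform_apriori_bound A hM hrobust hN hA
  set K := max K₀ 1
  have hK0 : 0 < K := zero_lt_one.trans_le (le_max_right _ _)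
  have hK : ∀ B : ℤ → X →L[ℝ] X, (∀ m, ‖(A m : X →L[ℝ] X) - B m‖ ≤ c) →
      ∀ (x : ℤ → X) (S δ : ℝ), (∀ n, ‖x n‖ ≤ S) →
        (∀ n, ‖x (n + 1) - B n (x n)‖ ≤ δ) → ∀ n, ‖x n‖ ≤ K * δ :=
    fun B hB x S δ hS hδ n => (hK₀ B hB x S δ hS hδ n).trans
      (mul_le_mul_of_nonneg_right (le_max_left _ _) ((norm_nonneg _).trans (hδ 0)))
  set η := 1 / (2 * K * D) with hη
  have hη0 : 0 < η := by positivity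
  refine ⟨1 / (2 * K), by positivity, η ^ r⁻¹, by positivity, fun ε hε hε₀ y hy hyF => ?_⟩
  have hεr : K * (D * ε ^ r) ≤ 1 / 2 := by
    have h1 : ε ^ r ≤ η := by
      calc ε ^ r ≤ (η ^ r⁻¹) ^ r := by gcongr
        _ = η := Real.rpow_inv_rpow hη0.le hr.ne'
    calc K * (D * ε ^ r) ≤ K * (D * η) := by gcongr
      _ = 1 / 2 := by rw [hη]; field_simp
  let B : ℤ → X →L[ℝ] X := fun n => A n + f' n (y n)
  have hB : ∀ m, ‖(A m : X →L[ℝ] X) - B m‖ ≤ c := fun m => by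
    simpa [B] using hfc m (y m)
  -- `g` is the remainder of the equation for the correction `w = x - y`.
  let g : (ℤ → X) → ℤ → X := fun w n =>
    f n (y n + w n) - f' n (y n) (w n) - (y (n + 1) - A n (y n))
  have hg : ∀ (w w' : ℤ → X) (δ : ℝ), (∀ n, ‖w n‖ ≤ ε) → (∀ n, ‖w' n‖ ≤ ε) →
      (∀ n, ‖w n - w' n‖ ≤ δ) → ∀ n, ‖g w n - g w' n‖ ≤ D * ε ^ r * δ := by
    intro w w' δ hw hw' hδ n
    have h1 := norm_sub_sub_fderiv_le (hdf n) hD.le hr.le (hHolder n) (y := y n) (hw n) (hw' n)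
    have e : g w n - g w' n =
        f n (y n + w n) - f n (y n + w' n) - f' n (y n) (w n - w' n) := by
      simp only [g, map_sub]
      abel
    rw [e]
    exact h1.trans (mul_le_mul_of_nonneg_left (hδ n) (by positivity))
  have hcontr : ∀ (w w' v v' : ℤ → X) (δ : ℝ), (∀ n, ‖w n‖ ≤ ε) → (∀ n, ‖w' n‖ ≤ ε) →
      (∀ n, ‖v n‖ ≤ ε) → (∀ n, ‖v' n‖ ≤ ε) → (∀ n, v (n + 1) - B n (v n) = g w n) →
      (∀ n, v' (n + 1) - B n (v' n) = g w' n) → (∀ n, ‖w n - w' n‖ ≤ δ) →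
      ∀ n, ‖v n - v' n‖ ≤ δ / 2 := by
    intro w w' v v' δ hw hw' hv hv' hvg hvg' hδ n
    have hδ0 : 0 ≤ δ := (norm_nonneg _).trans (hδ 0)
    refine (hK B hB (fun n => v n - v' n) (ε + ε) (D * ε ^ r * δ)
      (fun n => (norm_sub_le _ _).trans (add_le_add (hv n) (hv' n))) (fun n => ?_) n).trans ?_
    · have e : v (n + 1) - v' (n + 1) - B n (v n - v' n) = g w n - g w' n := by
        rw [← hvg, ← hvg', map_sub]
        abel
      rw [e]
      exact hg w w' δ hw hw' hδ n
    · nlinarith [mul_le_mul_of_nonneg_right hεr hδ0]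
  have hsolve : ∀ w : ℤ → X, ∃ v : ℤ → X, (∀ n, ‖w n‖ ≤ ε) →
      (∀ n, ‖v n‖ ≤ ε) ∧ ∀ n, v (n + 1) - B n (v n) = g w n := by
    intro w
    by_cases hw : ∀ n, ‖w n‖ ≤ ε
    · have hgw : ∀ n, ‖g w n‖ ≤ D * ε ^ r * ε + 1 / (2 * K) * ε := by
        intro n
        have h1 := hg w 0 ε hw (fun n => by simpa using hε.le) (fun n => by simpa using hw n) n
        have e : g 0 n = -(y (n + 1) - (A n (y n) + f n (y n))) := by
          simp only [g, Pi.zero_apply, map_zero, add_zero, sub_zero]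
          abel
        have h2 : ‖g 0 n‖ ≤ 1 / (2 * K) * ε := by
          rw [e, norm_neg]
          exact hyF n
        calc ‖g w n‖ = ‖(g w n - g 0 n) + g 0 n‖ := by rw [sub_add_cancel]
          _ ≤ _ := (norm_add_le _ _).trans (add_le_add h1 h2)
      obtain ⟨K', hK'⟩ := (hrobust B hB).exists_bounded_solution
      obtain ⟨v, hv, hvg⟩ := hK' _ _ hgw
      refine ⟨v, fun _ => ⟨fun n => ?_, hvg⟩⟩
      refine (hK B hB v _ _ hv (fun n => (hvg n).symm ▸ hgw n) n).trans ?_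
      have e : K * (1 / (2 * K) * ε) = ε / 2 := by field_simp
      rw [mul_add, e]
      nlinarith [mul_le_mul_of_nonneg_right hεr hε.le]
    · exact ⟨0, fun h => absurd h hw⟩
  choose Φ hΦ using hsolve
  let W : ℕ → ℤ → X := fun k => Φ^[k] 0
  have hWs : ∀ k, W (k + 1) = Φ (W k) := fun k => Function.iterate_succ_apply' Φ k 0
  have hW : ∀ k n, ‖W k n‖ ≤ ε := by
    intro k
    induction k with
    | zero => intro n; simpa [W] using hε.le
    | succ k ih => rw [hWs]; exact (hΦ _ ih).1
  have hWg : ∀ k n, W (k + 1) (n + 1) - B n (W (k + 1) n) = g (W k) n := fun k n => by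
    rw [hWs]
    exact (hΦ _ (hW k)).2 n
  have hWd : ∀ k n, ‖W k n - W (k + 1) n‖ ≤ ε * (1 / 2) ^ k := by
    intro k
    induction k with
    | zero =>
      intro n
      have := hW 1 n
      simpa [W] using this
    | succ k ih =>
      intro n
      refine (hcontr _ _ _ _ _ (hW _) (hW _) (hW _) (hW _) (hWg _) (hWg _) ih n).trans_eq ?_
      rw [pow_succ]
      ring
  have hlim : ∀ n, ∃ l, Filter.Tendsto (fun k => W k n) Filter.atTop (nhds l) := fun n =>
    cauchySeq_tendsto_of_complete (cauchySeq_of_le_geometric (1 / 2) ε (by norm_num)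
      fun k => by rw [dist_eq_norm]; exact hWd k n)
  choose w hw using hlim
  have hwε : ∀ n, ‖w n‖ ≤ ε := fun n => le_of_tendsto' (hw n).norm fun k => hW k n
  have hwg : ∀ n, w (n + 1) - B n (w n) = g w n := by
    intro n
    have hs : ∀ n, Filter.Tendsto (fun k => W (k + 1) n) Filter.atTop (nhds (w n)) := fun n =>
      (hw n).comp (Filter.tendsto_add_atTop_nat 1)
    have h1 := (hs (n + 1)).sub (((B n).continuous.tendsto _).comp (hs n))
    have hgc : Continuous fun a => f n (y n + a) - f' n (y n) a - (y (n + 1) - A n (y n)) := by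
      have : Continuous (f n) := continuous_iff_continuousAt.2 fun x => (hdf n x).continuousAt
      fun_prop
    have h2 : Filter.Tendsto (fun k => g (W k) n) Filter.atTop (nhds (g w n)) :=
      (hgc.tendsto (w n)).comp (hw n)
    refine tendsto_nhds_unique h1 (h2.congr fun k => ?_)
    exact (hWg k n).symm
  have hper_w : ∀ n, w (n + N) = w n := by
    intro n
    have hf'p : ∀ m x, f' (m + N) x = f' m x := fun m x => by
      have h1 := hdf (m + N) x
      rw [show f (m + N) = f m from funext (hf m)] at h1
      exact h1.unique (hdf m x)
    have hshift : ∀ m, w (m + 1 + N) - B m (w (m + N)) = g (fun j => w (j + N)) m := by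
      intro m
      have := hwg (m + N)
      have hy1 : y (m + N + 1) = y (m + 1) := by rw [add_right_comm, hy]
      simpa only [B, g, hA, hf, hf'p, hy, hy1, add_right_comm m (N : ℤ) 1] using this
    refine sub_eq_zero.1 (eq_zero_of_norm_le_half (v := fun n => w (n + N) - w n) (S := ε + ε)
      (fun n => (norm_sub_le _ _).trans (add_le_add (hwε _) (hwε _))) (fun δ hδ => ?_) n)
    exact hcontr (fun j => w (j + N)) w (fun j => w (j + N)) w δ (fun n => hwε _) hwε
      (fun n => hwε _) hwε hshift hwg hδ
  refine ⟨fun n => y n + w n, fun n => ?_, fun n => ?_, fun n => ?_⟩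
  · have h1 := sub_eq_iff_eq_add.1 (hwg n)
    simp only [g, B, add_apply, ContinuousLinearEquiv.coe_coe] at h1
    beta_reduce
    rw [h1, map_add]
    abel
  · simp only [hy, hper_w]
  · simpa using hwε n
end

section
/- Let $(A_m)_{m\in\mathbb{Z}}$ be a uniformly bounded sequence of invertible bounded operators on a Banach space $X$ admitting an exponential dichotomy. Let $(g_n)_{n\in\mathbb{Z}}$ be differentiable maps $g_n:X\to X$ with uniformly small derivatives ($\|d_xg_n\|\le c/2$ where $c$ is the robustness constant), uniformly Hölder derivatives, and $\sup_x\|g_n(x)\|\le\delta$ for a sufficiently small $\delta>0$, such that each $G_n=A_n+g_n$ is a homeomorphism. Then there exists a unique sequence of homeomorphisms $h_m:X\to X$, $m\in\mathbb{Z}$, such that $h_{m+1}\circ G_m = A_m\circ h_m$ and $\sup_{x\in X}\|h_m(x)-x\|\le\varepsilon$ for each $m$ (nonautonomous Grobman–Hartman theorem). -/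
section Dichotomy

variable {X : Type*} [NormedAddCommGroup X] [NormedSpace ℝ X]

/-- A vector of norm at most `κ * ‖x‖ + η` is, up to an error `η`, the image of `x` under a
rank one operator of norm at most `κ`. -/
theorem exists_rank_one_approx {κ η : ℝ} (hκ : 0 ≤ κ) (hη : 0 ≤ η) (x e : X)
    (he : ‖e‖ ≤ κ * ‖x‖ + η) :
    ∃ (φ : X →L[ℝ] ℝ) (u : X), ‖φ.smulRight u‖ ≤ κ ∧ ‖e - φ x • u‖ ≤ η := by
  by_cases hx : x = 0
  · refine ⟨0, 0, by simpa using hκ, ?_⟩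
    simpa [hx] using he
  have hx' : 0 < ‖x‖ := norm_pos_iff.2 hx
  obtain ⟨φ, hφ, hφx⟩ := exists_dual_vector ℝ x hx'.ne'
  have hφx' : φ x = ‖x‖ := by simpa using hφx
  set d := κ * ‖x‖ + η with hd
  have hd0 : 0 ≤ d := by positivity
  rcases hd0.eq_or_lt with h0 | hpos
  · refine ⟨0, 0, by simpa using hκ, ?_⟩
    have : ‖e‖ ≤ 0 := he.trans h0.ge
    simpa using this.trans hη
  have hcoef : (κ / d) * ‖x‖ = 1 - η / d := by
    field_simp
    rw [hd]; ring
  refine ⟨φ, (κ / d) • e, ?_, ?_⟩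
  · rw [ContinuousLinearMap.norm_smulRight_apply, hφ, one_mul, norm_smul,
      Real.norm_of_nonneg (by positivity)]
    calc κ / d * ‖e‖ ≤ κ / d * d := by gcongr
      _ = κ := by field_simp
  · have : e - φ x • (κ / d) • e = (η / d) • e := by
      rw [hφx', smul_smul, mul_comm, hcoef, sub_smul,
        one_smul]
      abel
    rw [this, norm_smul, Real.norm_of_nonneg (by positivity)]
    calc η / d * ‖e‖ ≤ η / d * d := by gcongr
      _ = η := by field_simp

theorem ExpDichotomy.surjective {B : ℤ → X →L[ℝ] X} (hB : ExpDichotomy B) (n : ℤ) :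
    Function.Surjective (B n) := by
  obtain ⟨E, -, -, -, -, -, hE, hE', -⟩ := hB
  intro x
  refine ⟨E n (n + 1) x, ?_⟩
  rw [← ContinuousLinearMap.comp_apply, ← hE', hE]
  rfl

/-- Along an orbit segment of a dichotomic sequence of injective operators, the norm is
controlled by the norms at the end points. -/
theorem ExpDichotomy.norm_le_endpoints {B : ℤ → X →L[ℝ] X} (hB : ExpDichotomy B)
    (hinj : ∀ n, Function.Injective (B n)) :
    ∃ C lam : ℝ, 0 < C ∧ 0 < lam ∧ ∀ (w : ℤ → X) (a b : ℤ),
      (∀ n, a ≤ n → n < b → w (n + 1) = B n (w n)) → ∀ n, a ≤ n → n ≤ b →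
        ‖w n‖ ≤ C * Real.exp (-lam * ((n - a : ℤ) : ℝ)) * ‖w a‖ +
          C * Real.exp (-lam * ((b - n : ℤ) : ℝ)) * ‖w b‖ := by
  obtain ⟨E, P, C, lam, hC, hlam, hE, hE', -, hPB, hs, hu⟩ := hB
  have hEn : ∀ n x, E n n x = x := fun n x => by rw [hE]; rfl
  have hE'n : ∀ m n x, E (m + 1) n x = B m (E m n x) := fun m n x => by rw [hE']; rfl
  have hPBn : ∀ m x, P (m + 1) (B m x) = B m (P m x) := fun m x =>
    DFunLike.congr_fun (hPB m) x
  refine ⟨C, lam, hC, hlam, fun w a b hw n han hnb => ?_⟩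
  have h1 : ∀ n, a ≤ n → n ≤ b → P n (w n) = E n a (P a (w a)) := by
    intro n han
    induction n, han using Int.leInduction with
    | base => intro _; rw [hEn]
    | succ n han ih =>
      intro hnb
      rw [hw n han (by lia), hPBn, hE'n, ih (by lia)]
  have h2 : ∀ n, n ≤ b → a ≤ n → w n - P n (w n) = E n b (w b - P b (w b)) := by
    intro n hnb
    induction n, hnb using Int.leInductionDown with
    | base => intro _; rw [hEn]
    | pred n hnb ih =>
      intro han
      apply hinj (n - 1)
      have ih := ih (by lia)
      have e1 := hw (n - 1) han (by lia)
      have e2 := hE'n (n - 1) b (w b - P b (w b))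
      have e3 := hPBn (n - 1) (w (n - 1))
      rw [sub_add_cancel] at e1 e2 e3
      rw [← e2, ← ih, map_sub, ← e1, ← e3, ← e1]
  have h3 : w n = (E n a).comp (P a) (w a)
      + (E n b).comp (ContinuousLinearMap.id ℝ X - P b) (w b) := by
    have h4 : w n = P n (w n) + (w n - P n (w n)) := by abel
    rw [h2 n hnb han, h1 n han hnb] at h4
    simpa using h4
  calc ‖w n‖ ≤ ‖(E n a).comp (P a) (w a)‖
      + ‖(E n b).comp (ContinuousLinearMap.id ℝ X - P b) (w b)‖ := by
        conv_lhs => rw [h3]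
        exact norm_add_le _ _
    _ ≤ _ := by
      gcongr
      · exact ContinuousLinearMap.le_of_opNorm_le _ (hs n a han) _
      · exact ContinuousLinearMap.le_of_opNorm_le _ (hu n b hnb) _

/-- A bounded complete orbit of a dichotomic sequence of injective operators vanishes. -/
theorem ExpDichotomy.eq_zero_of_bounded_s10 {B : ℤ → X →L[ℝ] X} (hB : ExpDichotomy B)
    (hinj : ∀ n, Function.Injective (B n)) {w : ℤ → X} {V : ℝ} (hV : ∀ n, ‖w n‖ ≤ V)
    (hw : ∀ n, w (n + 1) = B n (w n)) (n : ℤ) : w n = 0 := by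
  obtain ⟨C, lam, hC, hlam, h⟩ := hB.norm_le_endpoints hinj
  have key : ∀ k : ℕ, ‖w n‖ ≤ 2 * C * V * Real.exp (-lam) ^ k := by
    intro k
    have h1 := h w (n - k) (n + k) (fun n _ _ => hw n) n (by lia) (by lia)
    have e1 : n - (n - (k : ℤ)) = k := by ring
    have e2 : n + (k : ℤ) - n = k := by ring
    rw [e1, e2] at h1
    rw [← Real.exp_nat_mul, mul_comm (k : ℝ)]
    push_cast at h1
    calc ‖w n‖ ≤ _ := h1
      _ ≤ C * Real.exp (-lam * k) * V + C * Real.exp (-lam * k) * V := by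
        gcongr <;> exact hV _
      _ = _ := by ring
  have hlim : Filter.Tendsto (fun k : ℕ => 2 * C * V * Real.exp (-lam) ^ k) Filter.atTop
      (nhds (2 * C * V * 0)) :=
    (tendsto_pow_atTop_nhds_zero_of_lt_one (Real.exp_nonneg _)
      (Real.exp_lt_one_iff.2 (by linarith))).const_mul _
  rw [mul_zero] at hlim
  exact norm_le_zero_iff.1 (ge_of_tendsto' hlim key)

/-- The inhomogeneous equation driven by a dichotomic sequence has bounded solutions for bounded
forcing terms. -/
theorem ExpDichotomy.exists_bounded_solution_s10 [CompleteSpace X] {B : ℤ → X →L[ℝ] X}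
    (hB : ExpDichotomy B) :
    ∃ L : ℝ, 0 < L ∧ ∀ (f : ℤ → X) (η : ℝ), (∀ n, ‖f n‖ ≤ η) →
      ∃ v : ℤ → X, (∀ n, v (n + 1) = B n (v n) + f n) ∧ ∀ n, ‖v n‖ ≤ L * η := by
  obtain ⟨E, P, C, lam, hC, hlam, hE, hE', -, -, hs, hu⟩ := hB
  have hEn : ∀ n x, E n n x = x := fun n x => by rw [hE]; rfl
  have hE'n : ∀ m n x, E (m + 1) n x = B m (E m n x) := fun m n x => by rw [hE']; rfl
  set q := Real.exp (-lam) with hq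
  have hq0 : 0 < q := Real.exp_pos _
  have hq1 : q < 1 := Real.exp_lt_one_iff.2 (by linarith)
  have hgeo : Summable fun j : ℕ => q ^ j := summable_geometric_of_lt_one hq0.le hq1
  refine ⟨2 * C * (1 - q)⁻¹, by have : 0 < 1 - q := by linarith
                                positivity, fun f η hf => ?_⟩
  have hη : 0 ≤ η := (norm_nonneg _).trans (hf 0)
  set s : ℤ → ℕ → X := fun n j => E n (n - j) (P (n - j) (f (n - j - 1))) with hsdef
  set u : ℤ → ℕ → X := fun n j =>
    E n (n + 1 + j) (f (n + j) - P (n + 1 + j) (f (n + j))) with hudef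
  have hsb : ∀ n j, ‖s n j‖ ≤ C * η * q ^ j := by
    intro n j
    have h1 := hs n (n - j) (by lia)
    have e1 : n - (n - (j : ℤ)) = j := by ring
    rw [e1] at h1
    calc ‖s n j‖ = ‖(E n (n - j)).comp (P (n - j)) (f (n - j - 1))‖ := rfl
      _ ≤ C * Real.exp (-lam * ((j : ℤ) : ℝ)) * ‖f (n - j - 1)‖ :=
        ContinuousLinearMap.le_of_opNorm_le _ h1 _
      _ ≤ C * Real.exp (-lam * ((j : ℤ) : ℝ)) * η := by gcongr; exact hf _
      _ = C * η * q ^ j := by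
        rw [hq, ← Real.exp_nat_mul]; push_cast; ring_nf
  have hub : ∀ n j, ‖u n j‖ ≤ C * η * q ^ j := by
    intro n j
    have h1 := hu n (n + 1 + j) (by lia)
    have e1 : n + 1 + (j : ℤ) - n = j + 1 := by ring
    rw [e1] at h1
    calc ‖u n j‖ = ‖(E n (n + 1 + j)).comp (ContinuousLinearMap.id ℝ X - P (n + 1 + j))
          (f (n + j))‖ := by simp [hudef]
      _ ≤ C * Real.exp (-lam * ((j + 1 : ℤ) : ℝ)) * ‖f (n + j)‖ :=
        ContinuousLinearMap.le_of_opNorm_le _ h1 _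
      _ ≤ C * Real.exp (-lam * (j : ℝ)) * η := by
        gcongr ?_ * Real.exp ?_ * ?_
        · push_cast; nlinarith
        · exact hf _
      _ = C * η * q ^ j := by
        rw [hq, ← Real.exp_nat_mul]; ring_nf
  have hgeo' := hgeo.mul_left (C * η)
  have hsS : ∀ n, Summable (s n) := fun n => .of_norm_bounded hgeo' (hsb n)
  have huS : ∀ n, Summable (u n) := fun n => .of_norm_bounded hgeo' (hub n)
  have hgsum : HasSum (fun j : ℕ => C * η * q ^ j) (C * η * (1 - q)⁻¹) :=
    (hasSum_geometric_of_lt_one hq0.le hq1).mul_left _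
  refine ⟨fun n => ∑' j, s n j - ∑' j, u n j, fun n => ?_, fun n => ?_⟩
  · have h1 : ∑' j, s (n + 1) j = P (n + 1) (f n) + B n (∑' j, s n j) := by
      rw [(hsS (n + 1)).tsum_eq_zero_add, (B n).map_tsum (hsS n)]
      congr 1
      · simp [hsdef, hEn]
      · refine tsum_congr fun j => ?_
        simp only [hsdef, ← hE'n]
        push_cast
        rw [show n + 1 - ((j : ℤ) + 1) = n - j by ring]
    have h2 : B n (∑' j, u n j) = (f n - P (n + 1) (f n)) + ∑' j, u (n + 1) j := by
      rw [(B n).map_tsum (huS n), ((huS n).mapL (B n)).tsum_eq_zero_add]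
      congr 1
      · simp [hudef, ← hE'n, hEn]
      · refine tsum_congr fun j => ?_
        simp only [hudef, ← hE'n]
        push_cast
        rw [show n + ((j : ℤ) + 1) = n + 1 + j by ring,
          show n + 1 + ((j : ℤ) + 1) = n + 1 + 1 + j by ring]
    simp only [map_sub]
    rw [h1, h2]
    abel
  · calc ‖∑' j, s n j - ∑' j, u n j‖ ≤ ‖∑' j, s n j‖ + ‖∑' j, u n j‖ := norm_sub_le _ _
      _ ≤ C * η * (1 - q)⁻¹ + C * η * (1 - q)⁻¹ :=
        add_le_add (tsum_of_norm_bounded hgsum (hsb n)) (tsum_of_norm_bounded hgsum (hub n))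
      _ = _ := by ring

/-- For a dichotomic sequence of injective operators, bounded approximate orbits are small. -/
theorem ExpDichotomy.norm_le_of_approx [CompleteSpace X] {B : ℤ → X →L[ℝ] X}
    (hB : ExpDichotomy B) (hinj : ∀ n, Function.Injective (B n)) :
    ∃ L : ℝ, 0 < L ∧ ∀ (y : ℤ → X) (V η : ℝ), (∀ n, ‖y n‖ ≤ V) →
      (∀ n, ‖y (n + 1) - B n (y n)‖ ≤ η) → ∀ n, ‖y n‖ ≤ L * η := by
  obtain ⟨L, hL, h⟩ := hB.exists_bounded_solution_s10
  refine ⟨L, hL, fun y V η hV hy n => ?_⟩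
  obtain ⟨v, hv, hvb⟩ := h _ η hy
  have h0 := hB.eq_zero_of_bounded_s10 hinj (w := y - v) (V := V + L * η)
    (fun n => (norm_sub_le _ _).trans (add_le_add (hV n) (hvb n)))
    (fun n => by simp only [Pi.sub_apply, hv, map_sub]; abel) n
  rw [sub_eq_zero.1 h0]
  exact hvb n

end Dichotomy

section Robust

variable {X : Type*} [NormedAddCommGroup X]

theorem norm_le_two_mul_of_halving {y : ℤ → X} {V b : ℝ} (hV : ∀ n, ‖y n‖ ≤ V)
    (h : ∀ V, (∀ n, ‖y n‖ ≤ V) → ∀ n, ‖y n‖ ≤ V / 2 + b) (n : ℤ) : ‖y n‖ ≤ 2 * b := by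
  have hbdd : BddAbove (Set.range fun n => ‖y n‖) := ⟨V, by rintro _ ⟨n, rfl⟩; exact hV n⟩
  have h1 : ∀ n, ‖y n‖ ≤ ⨆ n, ‖y n‖ := le_ciSup hbdd
  have h2 := ciSup_le (h _ h1)
  linarith [h1 n]

/-- A two-sided growth estimate for sequences satisfying one-step bounds in both directions. -/
theorem norm_le_pow_of_step {z : ℤ → X} {Q η t : ℝ} (hQ : 1 ≤ Q) (ht : η ≤ t) (ht0 : 0 ≤ t)
    (hup : ∀ n, ‖z (n + 1)‖ ≤ Q * (‖z n‖ + η)) (hdown : ∀ n, ‖z n‖ ≤ Q * (‖z (n + 1)‖ + η))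
    {n₁ : ℤ} (h₁ : ‖z n₁‖ ≤ t) (j : ℕ) :
    ‖z (n₁ + j)‖ ≤ (2 * Q) ^ j * t ∧ ‖z (n₁ - j)‖ ≤ (2 * Q) ^ j * t := by
  induction j with
  | zero => simpa using h₁
  | succ j ih =>
    have h2 : 1 ≤ (2 * Q) ^ j := one_le_pow₀ (by linarith)
    have h3 : η ≤ (2 * Q) ^ j * t := ht.trans (le_mul_of_one_le_left ht0 h2)
    have h4 : ∀ x, x ≤ (2 * Q) ^ j * t → Q * (x + η) ≤ (2 * Q) ^ (j + 1) * t := by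
      intro x hx
      calc Q * (x + η) ≤ Q * ((2 * Q) ^ j * t + (2 * Q) ^ j * t) := by gcongr
        _ = _ := by ring
    push_cast
    constructor
    · rw [← add_assoc]
      exact (hup _).trans (h4 _ ih.1)
    · have h5 := hdown (n₁ - (j + 1))
      rw [show n₁ - ((j : ℤ) + 1) + 1 = n₁ - j by ring] at h5
      exact h5.trans (h4 _ ih.2)

variable [NormedSpace ℝ X]

/-- `y` is an orbit of `A` up to a relative error `κ` and an absolute error `η`. -/
def IsApproxOrbit (A : ℤ → X →L[ℝ] X) (κ η : ℝ) (y : ℤ → X) : Prop :=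
  ∀ n, ‖y (n + 1) - A n (y n)‖ ≤ κ * ‖y n‖ + η

/-- The sequence `A` is bounded by `M`, its terms expand norms by more than `c`, and every sequence
within distance `c` of `A` has an exponential dichotomy. -/
structure IsRobustDichotomy (A : ℤ → X →L[ℝ] X) (c M : ℝ) : Prop where
  pos : 0 < c
  bound : ∀ n, ‖A n‖ ≤ M
  lower : ∀ n x, x ≠ 0 → c * ‖x‖ < ‖A n x‖
  dichotomy : ∀ B : ℤ → X →L[ℝ] X, (∀ n, ‖A n - B n‖ ≤ c) → ExpDichotomy B

namespace IsApproxOrbit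

variable {A : ℤ → X →L[ℝ] X} {κ η : ℝ} {y : ℤ → X}

theorem smul (hy : IsApproxOrbit A κ η y) (t : ℝ) :
    IsApproxOrbit A κ (|t| * η) fun n => t • y n := by
  intro n
  simp only [map_smul, ← smul_sub, norm_smul, Real.norm_eq_abs]
  calc |t| * ‖y (n + 1) - A n (y n)‖ ≤ |t| * (κ * ‖y n‖ + η) := by gcongr; exact hy n
    _ = _ := by ring

theorem mono {η' : ℝ} (hy : IsApproxOrbit A κ η y) (h : η ≤ η') : IsApproxOrbit A κ η' y :=
  fun n => (hy n).trans (by gcongr)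

/-- Multiplication by a tent function of width `W` localizes approximate orbits. -/
theorem exists_cutoff (hy : IsApproxOrbit A κ η y) (hη : 0 ≤ η) {W : ℕ} (hW : 0 < W) (n₀ : ℤ)
    {V : ℝ} (hV : ∀ n, (n - n₀).natAbs ≤ W → ‖y n‖ ≤ V) :
    ∃ z, IsApproxOrbit A κ (η + V / W) z ∧ z n₀ = y n₀ ∧
      (∀ n, W ≤ (n - n₀).natAbs → z n = 0) ∧ ∀ n, ‖z n‖ ≤ V := by
  have hW' : (0 : ℝ) < W := by exact_mod_cast hW
  have hV0 : 0 ≤ V := (norm_nonneg _).trans (hV n₀ (by simp))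
  set θ : ℤ → ℝ := fun n => max (1 - |((n - n₀ : ℤ) : ℝ)| / W) 0 with hθ
  have hθ0 : ∀ n, 0 ≤ θ n := fun n => le_max_right _ _
  have hθ1 : ∀ n, θ n ≤ 1 := fun n => max_le (by simp; positivity) zero_le_one
  have hθW : ∀ n, W ≤ (n - n₀).natAbs → θ n = 0 := by
    intro n hn
    apply max_eq_right
    have : (W : ℝ) ≤ |((n - n₀ : ℤ) : ℝ)| := by
      rw [← Int.cast_abs, ← Nat.cast_natAbs]
      exact_mod_cast hn
    rw [sub_nonpos, le_div_iff₀ hW']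
    linarith
  have hθL : ∀ n, |θ (n + 1) - θ n| ≤ 1 / W := by
    intro n
    refine (abs_max_sub_max_le_abs _ _ _).trans ?_
    rw [sub_sub_sub_cancel_left, ← sub_div, abs_div, abs_of_pos hW']
    gcongr
    refine (abs_abs_sub_abs_le_abs_sub _ _).trans ?_
    push_cast
    ring_nf
    simp
  refine ⟨fun n => θ n • y n, fun n => ?_, by simp [hθ], fun n hn => by simp [hθW n hn],
    fun n => ?_⟩
  swap
  · by_cases hn : (n - n₀).natAbs ≤ W
    · rw [norm_smul, Real.norm_of_nonneg (hθ0 n)]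
      exact (mul_le_of_le_one_left (norm_nonneg _) (hθ1 n)).trans (hV n hn)
    · simpa [hθW n (by lia)] using hV0
  have h1 : θ (n + 1) • y (n + 1) - A n (θ n • y n)
      = θ n • (y (n + 1) - A n (y n)) + (θ (n + 1) - θ n) • y (n + 1) := by
    rw [map_smul, smul_sub, sub_smul]; abel
  have h2 : |θ (n + 1) - θ n| * ‖y (n + 1)‖ ≤ V / W := by
    by_cases hn : (n + 1 - n₀).natAbs ≤ W
    · calc |θ (n + 1) - θ n| * ‖y (n + 1)‖ ≤ 1 / W * V := by
            gcongr
            exacts [hθL n, hV _ hn]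
        _ = V / W := by ring
    · rw [hθW (n + 1) (by lia), hθW n (by lia)]
      simp only [sub_self, abs_zero, zero_mul]
      positivity
  calc ‖θ (n + 1) • y (n + 1) - A n (θ n • y n)‖
      ≤ θ n * ‖y (n + 1) - A n (y n)‖ + |θ (n + 1) - θ n| * ‖y (n + 1)‖ := by
        rw [h1]
        refine (norm_add_le _ _).trans ?_
        rw [norm_smul, norm_smul, Real.norm_of_nonneg (hθ0 n), Real.norm_eq_abs]
    _ ≤ θ n * (κ * ‖y n‖ + η) + V / W := by
        gcongr
        exact hy n
    _ ≤ κ * (θ n * ‖y n‖) + (η + V / W) := by nlinarith [hθ0 n, hθ1 n]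
    _ = _ := by rw [norm_smul, Real.norm_of_nonneg (hθ0 n)]

end IsApproxOrbit

namespace IsRobustDichotomy

variable {A : ℤ → X →L[ℝ] X} {c M : ℝ}

theorem injective (hA : IsRobustDichotomy A c M) {n : ℤ} {B : X →L[ℝ] X} (hB : ‖A n - B‖ ≤ c) :
    Function.Injective B := by
  rw [injective_iff_map_eq_zero]
  intro x hx
  by_contra hx0
  have h1 := ContinuousLinearMap.le_of_opNorm_le _ hB x
  rw [sub_apply, hx, sub_zero] at h1
  exact (hA.lower n x hx0).not_ge h1

theorem exists_operators {κ η : ℝ} {y : ℤ → X} (hκ : 0 ≤ κ) (hη : 0 ≤ η)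
    (hy : IsApproxOrbit A κ η y) :
    ∃ B : ℤ → X →L[ℝ] X, (∀ n, ‖A n - B n‖ ≤ κ) ∧ ∀ n, ‖y (n + 1) - B n (y n)‖ ≤ η := by
  choose φ u hS hSy using fun n => exists_rank_one_approx hκ hη (y n) _ (hy n)
  refine ⟨fun n => A n + (φ n).smulRight (u n), fun n => by simpa using hS n, fun n => ?_⟩
  simpa [sub_sub] using hSy n

variable [CompleteSpace X]

theorem eq_zero (hA : IsRobustDichotomy A c M) {z : ℤ → X} {V : ℝ} (hV : ∀ n, ‖z n‖ ≤ V)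
    (hz : IsApproxOrbit A c 0 z) (n : ℤ) : z n = 0 := by
  obtain ⟨B, hB, hBz⟩ := exists_operators hA.pos.le le_rfl hz
  obtain ⟨L, -, h⟩ := (hA.dichotomy B hB).norm_le_of_approx fun n => hA.injective (hB n)
  simpa using h z V 0 hV hBz n

/-- Finitely supported approximate orbits living far from the origin of time are small, with
uniform constants. -/
theorem exists_far_bound (hA : IsRobustDichotomy A c M) :
    ∃ (K : ℕ) (L : ℝ), 0 < L ∧ ∀ (y : ℤ → X) (η : ℝ), 0 ≤ η → (∀ n, n.natAbs < K → y n = 0) →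
      (∃ N : ℕ, ∀ n, N ≤ n.natAbs → y n = 0) → IsApproxOrbit A (c / 2) η y → ∀ n, ‖y n‖ ≤ L * η := by
  by_contra! hcon
  have hbad : ∀ K : ℕ, ∃ (y : ℤ → X) (N : ℕ) (n : ℤ), (∀ n, n.natAbs < K → y n = 0) ∧
      (∀ n, N ≤ n.natAbs → y n = 0) ∧ ‖y n‖ = 1 ∧ IsApproxOrbit A (c / 2) (1 / (K + 1)) y := by
    intro K
    obtain ⟨y, η, hη, hK, ⟨N, hN⟩, hy, n, hn⟩ := hcon K (K + 1) (by positivity)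
    have hpos : 0 < ‖y n‖ := lt_of_le_of_lt (by positivity) hn
    refine ⟨fun m => ‖y n‖⁻¹ • y m, N, n, fun m hm => by simp [hK m hm],
      fun m hm => by simp [hN m hm], ?_, (hy.smul _).mono ?_⟩
    · rw [norm_smul, norm_inv, norm_norm, inv_mul_cancel₀ hpos.ne']
    · rw [abs_of_pos (inv_pos.2 hpos), inv_mul_le_iff₀ hpos, mul_one_div,
        le_div_iff₀ (by positivity)]
      linarith
  choose y N m hK hN hm hy using hbad
  set k : ℕ → ℕ := fun i => Nat.rec 0 (fun _ a => max (N a) (a + 1)) i with hk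
  have hk1 : ∀ i, k (i + 1) = max (N (k i)) (k i + 1) := fun i => rfl
  have hmono : StrictMono k := strictMono_nat_of_lt_succ fun i => by rw [hk1]; simp
  have hdisj : ∀ n i j, i < j → y (k i) n ≠ 0 → y (k j) n = 0 := by
    intro n i j hij hi
    apply hK
    have h1 : n.natAbs < N (k i) := by
      by_contra! h
      exact hi (hN _ _ h)
    have h2 : N (k i) ≤ k (i + 1) := by rw [hk1]; exact le_max_left _ _
    have h3 : k (i + 1) ≤ k j := hmono.monotone hij
    lia
  have hB : ∀ n, ∃ B : X →L[ℝ] X, ‖A n - B‖ ≤ c ∧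
      ∀ i, ‖y (k i) (n + 1) - B (y (k i) n)‖ ≤ 1 / (k i + 1) := by
    intro n
    have hzero : ∀ i, ∀ B : X →L[ℝ] X, y (k i) n = 0 →
        ‖y (k i) (n + 1) - B (y (k i) n)‖ ≤ 1 / (k i + 1) := by
      intro i B h
      simpa [h] using hy (k i) n
    by_cases hex : ∃ i, y (k i) n ≠ 0
    · obtain ⟨i, hi⟩ := hex
      obtain ⟨φ, u, hS, hSy⟩ := exists_rank_one_approx (by linarith [hA.pos]) (by positivity)
        (y (k i) n) _ (hy (k i) n)
      refine ⟨A n + φ.smulRight u, ?_, fun j => ?_⟩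
      · rw [sub_add_cancel_left, norm_neg]
        linarith [hA.pos]
      · rcases lt_trichotomy i j with h | h | h
        · exact hzero _ _ (hdisj n i j h hi)
        · subst h
          simpa [sub_sub] using hSy
        · refine hzero _ _ ?_
          by_contra hj
          exact hi (hdisj n j i h hj)
    · push Not at hex
      exact ⟨A n, by simpa using hA.pos.le, fun i => hzero i _ (hex i)⟩
  choose B hBc hBy using hB
  obtain ⟨L, hL, h⟩ := (hA.dichotomy B hBc).norm_le_of_approx fun n => hA.injective (hBc n)
  obtain ⟨i, hi⟩ := exists_nat_gt L
  have hbdd : ∃ V, ∀ n, ‖y (k i) n‖ ≤ V := by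
    have hfin : (Set.range fun n => ‖y (k i) n‖).Finite := by
      refine ((Set.finite_Icc (-(N (k i) : ℤ)) (N (k i))).image
        (fun n => ‖y (k i) n‖) |>.insert 0).subset ?_
      rintro _ ⟨n, rfl⟩
      by_cases hn : N (k i) ≤ n.natAbs
      · exact Or.inl (by simp [hN _ _ hn])
      · exact Or.inr ⟨n, by rw [Set.mem_Icc]; lia, rfl⟩
    obtain ⟨V, hV⟩ := hfin.bddAbove
    exact ⟨V, fun n => hV ⟨n, rfl⟩⟩
  obtain ⟨V, hV⟩ := hbdd
  have h1 := h (y (k i)) V _ hV (fun n => hBy n i) (m (k i))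
  rw [hm, mul_one_div, le_div_iff₀ (by positivity)] at h1
  have h2 : (i : ℝ) ≤ k i := by exact_mod_cast hmono.le_apply
  linarith

/-- Bounded approximate orbits with relative error `c / 2` are small, with a uniform constant. -/
theorem exists_uniform_bound (hA : IsRobustDichotomy A c M) :
    ∃ L : ℝ, 0 < L ∧ ∀ (y : ℤ → X) (V η : ℝ), 0 ≤ η → (∀ n, ‖y n‖ ≤ V) →
      IsApproxOrbit A (c / 2) η y → ∀ n, ‖y n‖ ≤ L * η := by
  have hc := hA.pos
  have hM : 0 ≤ M := (norm_nonneg _).trans (hA.bound 0)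
  have hcA : ∀ n, ‖A n - A n‖ ≤ c := fun n => by simpa using hc.le
  obtain ⟨K, L₁, hL₁, hfar⟩ := hA.exists_far_bound
  obtain ⟨C, lam, hC, hlam, hend⟩ :=
    (hA.dichotomy A hcA).norm_le_endpoints fun n => hA.injective (hcA n)
  obtain ⟨W, hW⟩ := exists_nat_gt (2 * ((1 + 2 * C) * L₁))
  have hWpos : (0 : ℝ) < W := lt_trans (by positivity) hW
  set K₂ : ℕ := K + W with hK₂
  set β := (1 + 2 * C) * L₁ with hβ
  set ρ := c * β + 1 with hρ
  set Q := M + c + 2 / c + 1 with hQ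
  have hβ0 : 0 < β := by positivity
  have hL₁β : L₁ ≤ β := by rw [hβ]; nlinarith
  have hQc : 2 / c ≤ Q := by rw [hQ]; linarith
  have hQM : M + c / 2 ≤ Q := by rw [hQ]; have : 0 < 2 / c := by positivity
                                 linarith
  have hQ1 : 1 ≤ Q := by rw [hQ]; have : 0 < 2 / c := by positivity
                         linarith
  have htent : ∀ (y : ℤ → X) (V η : ℝ), 0 ≤ η → (∀ n, ‖y n‖ ≤ V) →
      IsApproxOrbit A (c / 2) η y → ∀ n, K₂ ≤ n.natAbs → ‖y n‖ ≤ L₁ * (η + V / W) := by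
    intro y V η hη hV hy n hn
    have hV0 : 0 ≤ V := (norm_nonneg _).trans (hV 0)
    obtain ⟨z, hz, hzn, hz0, -⟩ := hy.exists_cutoff hη (W := W) (by exact_mod_cast hWpos) n
      fun m _ => hV m
    rw [← hzn]
    refine hfar z _ (by positivity) (fun m hm => hz0 m ?_) ⟨n.natAbs + W, fun m hm => hz0 m ?_⟩
      hz n <;> lia
  refine ⟨2 * ((2 * Q) ^ (2 * K₂) * ((1 + 2 / c) * ρ) + L₁ * ρ) + 2 * β, by positivity,
    fun y V η hη hV hy => ?_⟩
  obtain ⟨B, hB, hBy⟩ := exists_operators (by positivity) hη hy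
  have hdist : ∀ (z : ℤ → X) (n : ℤ) {D : X →L[ℝ] X}, ‖A n - D‖ ≤ c / 2 → ∀ e : ℝ,
      ‖z (n + 1) - D (z n)‖ ≤ e → ‖z (n + 1) - A n (z n)‖ ≤ c / 2 * ‖z n‖ + e := by
    intro z n D hD e he
    have h1 : z (n + 1) - A n (z n) = (z (n + 1) - D (z n)) - (A n - D) (z n) := by simp
    rw [h1, add_comm (c / 2 * _)]
    exact (norm_sub_le _ _).trans (add_le_add he (ContinuousLinearMap.le_of_opNorm_le _ hD _))
  classical
  set T : ℤ → X →L[ℝ] X := fun n => if -(K₂ : ℤ) ≤ n ∧ n < K₂ then A n else B n with hT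
  set f : ℤ → X := fun n => if -(K₂ : ℤ) ≤ n ∧ n < K₂ then 0 else y (n + 1) - B n (y n) with hf
  have hTA : ∀ n, ‖A n - T n‖ ≤ c / 2 := by
    intro n
    simp only [hT]
    split_ifs
    · simpa using (half_pos hc).le
    · exact hB n
  have hfη : ∀ n, ‖f n‖ ≤ η := by
    intro n
    simp only [hf]
    split_ifs
    · simpa using hη
    · exact hBy n
  obtain ⟨L₀, -, hL₀⟩ := (hA.dichotomy T fun n =>
    (hTA n).trans (by linarith)).exists_bounded_solution_s10
  obtain ⟨v, hv, hvb⟩ := hL₀ f η hfη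
  have hvin : ∀ n, -(K₂ : ℤ) ≤ n → n < K₂ → v (n + 1) = A n (v n) := by
    intro n h1 h2
    rw [hv]
    simp [hT, hf, h1, h2]
  have hvA : IsApproxOrbit A (c / 2) η v := fun n =>
    hdist v n (hTA n) η (by rw [hv, add_sub_cancel_left]; exact hfη n)
  have hv2 : ∀ n, ‖v n‖ ≤ 2 * (β * η) := by
    refine norm_le_two_mul_of_halving hvb fun V hV n => ?_
    have hV0 : 0 ≤ V := (norm_nonneg _).trans (hV 0)
    have hlarge : L₁ * (η + V / W) * (1 + 2 * C) ≤ V / 2 + β * η := by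
      have : β * (V / W) ≤ V / 2 := by
        rw [mul_div_assoc', div_le_div_iff₀ hWpos two_pos]
        nlinarith
      calc L₁ * (η + V / W) * (1 + 2 * C) = β * (V / W) + β * η := by rw [hβ]; ring
        _ ≤ _ := by linarith
    have ha0 : 0 ≤ L₁ * (η + V / W) := by positivity
    have hout := htent v V η hη hV hvA
    by_cases hn : K₂ ≤ n.natAbs
    · have := hout n hn
      nlinarith
    · have hn' : -(K₂ : ℤ) ≤ n ∧ n ≤ K₂ := by lia
      have h1 := hend v (-K₂) K₂ hvin n hn'.1 hn'.2
      have hexp : ∀ k : ℤ, 0 ≤ k → Real.exp (-lam * (k : ℝ)) ≤ 1 := by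
        intro k hk
        have hk' : (0 : ℝ) ≤ k := by exact_mod_cast hk
        rw [Real.exp_le_one_iff]
        nlinarith
      calc ‖v n‖ ≤ _ := h1
        _ ≤ C * 1 * (L₁ * (η + V / W)) + C * 1 * (L₁ * (η + V / W)) := by
          gcongr
          · exact hexp _ (by lia)
          · exact hout _ (by simp)
          · exact hexp _ (by lia)
          · exact hout _ (by simp)
        _ ≤ _ := by linarith
  set z : ℤ → X := fun n => y n - v n with hz
  have hzb : ∀ n, ‖z n‖ ≤ V + 2 * (β * η) := fun n =>
    (norm_sub_le _ _).trans (add_le_add (hV n) (hv2 n))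
  have hρη : 0 ≤ ρ * η := by positivity
  have hzout : ∀ n, ¬ (-(K₂ : ℤ) ≤ n ∧ n < K₂) →
      ‖z (n + 1) - A n (z n)‖ ≤ c / 2 * ‖z n‖ := by
    intro n hn
    have h0 : z (n + 1) - B n (z n) = 0 := by
      simp only [hz, hv, hT, hf, if_neg hn, map_sub]; abel
    have h1 := hdist z n (hB n) 0 (by rw [h0, norm_zero])
    simpa using h1
  have hzA : IsApproxOrbit A (c / 2) (ρ * η) z := by
    intro n
    by_cases hn : -(K₂ : ℤ) ≤ n ∧ n < K₂
    · have h1 : z (n + 1) - A n (z n) = y (n + 1) - A n (y n) := by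
        simp only [hz, hvin n hn.1 hn.2, map_sub]; abel
      have h2 : ‖y n‖ ≤ ‖z n‖ + ‖v n‖ := by
        simpa [hz] using norm_add_le (z n) (v n)
      rw [h1]
      calc ‖y (n + 1) - A n (y n)‖ ≤ c / 2 * ‖y n‖ + η := hy n
        _ ≤ c / 2 * (‖z n‖ + 2 * (β * η)) + η := by
          gcongr
          exact h2.trans (by gcongr; exact hv2 n)
        _ = _ := by rw [hρ]; ring
    · linarith [hzout n hn]
  have hz2 : ∀ n, ‖z n‖ ≤ 2 * ((2 * Q) ^ (2 * K₂) * ((1 + 2 / c) * (ρ * η)) + L₁ * (ρ * η)) := by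
    by_cases hsmall : ∃ n₁, (-(K₂ : ℤ) ≤ n₁ ∧ n₁ < K₂) ∧ c / 2 * ‖z n₁‖ < ρ * η
    · obtain ⟨n₁, hn₁, hzn₁⟩ := hsmall
      set t := (1 + 2 / c) * (ρ * η) with ht
      have ht0 : 0 ≤ t := by positivity
      have hηt : ρ * η ≤ t := le_mul_of_one_le_left hρη (by simp; positivity)
      have hzt : ‖z n₁‖ ≤ t := by
        have h1 : ‖z n₁‖ = 2 / c * (c / 2 * ‖z n₁‖) := by field_simp
        rw [h1, ht, add_mul, one_mul]
        have : 2 / c * (c / 2 * ‖z n₁‖) ≤ 2 / c * (ρ * η) := by gcongr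
        linarith
      have hstep : ∀ n, ‖z (n + 1)‖ ≤ Q * (‖z n‖ + ρ * η) := by
        intro n
        have h1 := (norm_le_norm_add_norm_sub' (z (n + 1)) (A n (z n))).trans
          (add_le_add (ContinuousLinearMap.le_of_opNorm_le _ (hA.bound n) _) (hzA n))
        nlinarith [norm_nonneg (z n)]
      have hstep' : ∀ n, ‖z n‖ ≤ Q * (‖z (n + 1)‖ + ρ * η) := by
        intro n
        have h1 : c * ‖z n‖ ≤ ‖A n (z n)‖ := by
          by_cases h0 : z n = 0
          · simp [h0]
          · exact (hA.lower n _ h0).le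
        have h2 := norm_le_norm_add_norm_sub (z (n + 1)) (A n (z n))
        have h3 := hzA n
        calc ‖z n‖ = 2 / c * (c / 2 * ‖z n‖) := by field_simp
          _ ≤ 2 / c * (‖z (n + 1)‖ + ρ * η) := by gcongr; linarith
          _ ≤ _ := by gcongr
      have hpow := norm_le_pow_of_step hQ1 hηt ht0 hstep hstep' hzt
      refine norm_le_two_mul_of_halving hzb fun Z hZ n => ?_
      have hZ0 : 0 ≤ Z := (norm_nonneg _).trans (hZ 0)
      have hP : 0 ≤ (2 * Q) ^ (2 * K₂) * t := by positivity
      by_cases hn : K₂ ≤ n.natAbs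
      · have h1 := htent z Z _ hρη hZ hzA n hn
        have h2 : L₁ * (Z / W) ≤ Z / 2 := by
          rw [mul_div_assoc', div_le_div_iff₀ hWpos two_pos]
          nlinarith
        linarith
      · have hn' : -(K₂ : ℤ) ≤ n ∧ n ≤ K₂ := by lia
        have hle : (2 * Q) ^ (n - n₁).natAbs * t ≤ (2 * Q) ^ (2 * K₂) * t := by
          gcongr
          · linarith
          · lia
        have h1 : ‖z n‖ ≤ (2 * Q) ^ (n - n₁).natAbs * t := by
          rcases le_total n₁ n with h | h
          · have := (hpow (n - n₁).natAbs).1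
            rwa [show n₁ + ((n - n₁).natAbs : ℤ) = n by lia] at this
          · have := (hpow (n - n₁).natAbs).2
            rwa [show n₁ - ((n - n₁).natAbs : ℤ) = n by lia] at this
        have h2 : 0 ≤ L₁ * (ρ * η) := by positivity
        linarith
    · push Not at hsmall
      intro n
      have h0 : z n = 0 := by
        refine hA.eq_zero hzb (fun n => ?_) n
        by_cases hn : -(K₂ : ℤ) ≤ n ∧ n < K₂
        · linarith [hzA n, hsmall n hn]
        · have := hzout n hn
          nlinarith [norm_nonneg (z n)]
      rw [h0, norm_zero]
      positivity
  intro n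
  have h1 : ‖y n‖ ≤ ‖z n‖ + ‖v n‖ := by
    simpa [hz] using norm_add_le (z n) (v n)
  calc ‖y n‖ ≤ ‖z n‖ + ‖v n‖ := h1
    _ ≤ _ := add_le_add (hz2 n) (hv2 n)
    _ = _ := by ring

end IsRobustDichotomy

end Robust

section Conjugacy

open Topology Filter
open scoped BoundedContinuousFunction

variable {X : Type*} [NormedAddCommGroup X] [NormedSpace ℝ X]

/-- A nonautonomous dynamics given by homeomorphisms has a global flow. -/
theorem exists_flow {Y : Type*} [TopologicalSpace Y] (Φ : ℤ → Y ≃ₜ Y) :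
    ∃ H : ℤ → Y ≃ₜ Y, ∀ n x, H (n + 1) x = Φ n (H n x) := by
  let p : ℕ → Y ≃ₜ Y := fun k => Nat.rec (Homeomorph.refl Y) (fun k e => e.trans (Φ k)) k
  let q : ℕ → Y ≃ₜ Y := fun k =>
    Nat.rec (Homeomorph.refl Y) (fun k e => e.trans (Φ (Int.negSucc k)).symm) k
  refine ⟨fun n => match n with
    | Int.ofNat k => p k
    | Int.negSucc k => q (k + 1), fun n x => ?_⟩
  match n with
  | Int.ofNat k => rfl
  | Int.negSucc 0 => exact ((Φ (Int.negSucc 0)).apply_symm_apply _).symm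
  | Int.negSucc (k + 1) => exact ((Φ (Int.negSucc (k + 1))).apply_symm_apply _).symm

/-- The maps `Φ n` differ from `A n` by maps with Lipschitz constant `κ`. -/
def IsLipschitzPerturbation (A : ℤ → X →L[ℝ] X) (κ : ℝ) (Φ : ℤ → X → X) : Prop :=
  ∀ n x y, ‖(Φ n x - Φ n y) - A n (x - y)‖ ≤ κ * ‖x - y‖

theorem IsLipschitzPerturbation.isApproxOrbit_sub {A : ℤ → X →L[ℝ] X} {κ δ : ℝ} {Φ : ℤ → X → X}
    (hΦ : IsLipschitzPerturbation A κ Φ) {x y : ℤ → X}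
    (h : ∀ n, ‖(x (n + 1) - Φ n (x n)) - (y (n + 1) - Φ n (y n))‖ ≤ δ) :
    IsApproxOrbit A κ δ fun n => x n - y n := by
  intro n
  have h1 : x (n + 1) - y (n + 1) - A n (x n - y n)
      = ((Φ n (x n) - Φ n (y n)) - A n (x n - y n))
        + ((x (n + 1) - Φ n (x n)) - (y (n + 1) - Φ n (y n))) := by abel
  rw [h1]
  exact (norm_add_le _ _).trans (add_le_add (hΦ n _ _) (h n))

theorem IsLipschitzPerturbation.isApproxOrbit_sub_of_orbit {A : ℤ → X →L[ℝ] X} {κ : ℝ}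
    {Φ : ℤ → X → X} (hΦ : IsLipschitzPerturbation A κ Φ) {x y : ℤ → X}
    (hx : ∀ n, x (n + 1) = Φ n (x n)) (hy : ∀ n, y (n + 1) = Φ n (y n)) :
    IsApproxOrbit A κ 0 fun n => x n - y n :=
  hΦ.isApproxOrbit_sub fun n => by simp [hx, hy]

namespace IsRobustDichotomy

variable [CompleteSpace X] {A : ℤ → X →L[ℝ] X} {c M : ℝ}

/-- Two orbits at bounded distance coincide. -/
theorem orbit_unique (hA : IsRobustDichotomy A c M) {Φ : ℤ → X → X}
    (hΦ : IsLipschitzPerturbation A (c / 2) Φ) {x y : ℤ → X} {V : ℝ}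
    (hx : ∀ n, x (n + 1) = Φ n (x n)) (hy : ∀ n, y (n + 1) = Φ n (y n))
    (hV : ∀ n, ‖x n - y n‖ ≤ V) (n : ℤ) : x n = y n := by
  obtain ⟨L, -, h⟩ := hA.exists_uniform_bound
  have h1 := h _ V 0 le_rfl hV (hΦ.isApproxOrbit_sub_of_orbit hx hy) n
  rw [mul_zero, norm_le_zero_iff] at h1
  exact sub_eq_zero.1 h1

/-- Solvability of the perturbed inhomogeneous equation in bounded sequences, by continuation from
the linear equation. -/
theorem exists_bounded_solution_s10 (hA : IsRobustDichotomy A c M) {N : ℤ → X → X}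
    (hN : ∀ n x y, ‖N n x - N n y‖ ≤ c / 2 * ‖x - y‖) (hN0 : ∀ n, N n 0 = 0) (f : ℤ →ᵇ X) :
    ∃ ψ : ℤ →ᵇ X, ∀ n, ψ (n + 1) = A n (ψ n) + N n (ψ n) + f n := by
  have hc := hA.pos
  obtain ⟨L, hL, hbound⟩ := hA.exists_uniform_bound
  let S : ℝ → Prop := fun t => ∀ f : ℤ →ᵇ X, ∃ ψ : ℤ →ᵇ X,
    ∀ n, ψ (n + 1) = A n (ψ n) + t • N n (ψ n) + f n
  have hS0 : S 0 := by
    intro f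
    obtain ⟨L₀, -, hL₀⟩ := (hA.dichotomy A fun n => by simpa using hc.le).exists_bounded_solution_s10
    obtain ⟨v, hv, hvb⟩ := hL₀ f ‖f‖ f.norm_coe_le_norm
    exact ⟨.ofNormedAddCommGroup v continuous_of_discreteTopology _ hvb, fun n => by simp [hv]⟩
  have hstep : ∀ t s : ℝ, 0 ≤ t → 0 ≤ s → t ≤ 1 → L * (s * (c / 2)) < 1 → S t → S (t + s) := by
    intro t s ht hs hts hsmall hSt f
    choose sol hsol using hSt
    have hsol_dist : ∀ g g', ‖sol g - sol g'‖ ≤ L * ‖g - g'‖ := by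
      intro g g'
      refine (BoundedContinuousFunction.norm_le (by positivity)).2 fun n => ?_
      refine hbound (fun n => sol g n - sol g' n) ‖sol g - sol g'‖ ‖g - g'‖ (norm_nonneg _)
        (fun n => (sol g - sol g').norm_coe_le_norm n) ?_ n
      intro n
      have h1 : sol g (n + 1) - sol g' (n + 1) - A n (sol g n - sol g' n)
          = t • (N n (sol g n) - N n (sol g' n)) + (g - g') n := by
        rw [hsol, hsol, map_sub, smul_sub, BoundedContinuousFunction.sub_apply]; abel
      rw [h1]
      refine (norm_add_le _ _).trans (add_le_add ?_ ((g - g').norm_coe_le_norm n))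
      rw [norm_smul, Real.norm_of_nonneg ht]
      exact (mul_le_of_le_one_left (norm_nonneg _) hts).trans (hN _ _ _)
    let Nb : (ℤ →ᵇ X) → (ℤ →ᵇ X) := fun ψ =>
      .ofNormedAddCommGroup (fun n => N n (ψ n)) continuous_of_discreteTopology (c / 2 * ‖ψ‖)
        fun n => by
          have h1 := hN n (ψ n) 0
          rw [hN0, sub_zero, sub_zero] at h1
          exact h1.trans (by gcongr; exact ψ.norm_coe_le_norm n)
    have hNb : ∀ ψ ψ', ‖Nb ψ - Nb ψ'‖ ≤ c / 2 * ‖ψ - ψ'‖ := fun ψ ψ' =>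
      (BoundedContinuousFunction.norm_le (by positivity)).2 fun n =>
        (hN n _ _).trans (by gcongr; exact (ψ - ψ').norm_coe_le_norm n)
    have hcontr : ContractingWith ⟨L * (s * (c / 2)), by positivity⟩
        fun ψ => sol (f + s • Nb ψ) := by
      refine ⟨hsmall, LipschitzWith.of_dist_le_mul fun ψ ψ' => ?_⟩
      rw [dist_eq_norm, dist_eq_norm]
      calc ‖sol (f + s • Nb ψ) - sol (f + s • Nb ψ')‖
          ≤ L * ‖(f + s • Nb ψ) - (f + s • Nb ψ')‖ := hsol_dist _ _
        _ = L * (s * ‖Nb ψ - Nb ψ'‖) := by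
          rw [add_sub_add_left_eq_sub, ← smul_sub, norm_smul, Real.norm_of_nonneg hs]
        _ ≤ L * (s * (c / 2 * ‖ψ - ψ'‖)) := by gcongr; exact hNb _ _
        _ = L * (s * (c / 2)) * ‖ψ - ψ'‖ := by ring
    have hfix := hcontr.fixedPoint_isFixedPt
    set ψ := ContractingWith.fixedPoint _ hcontr with hψ
    refine ⟨ψ, fun n => ?_⟩
    have h1 := hsol (f + s • Nb ψ) n
    rw [show sol (f + s • Nb ψ) = ψ from hfix] at h1
    rw [h1, add_smul]
    simp only [BoundedContinuousFunction.add_apply, BoundedContinuousFunction.smul_apply]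
    rw [show Nb ψ n = N n (ψ n) from rfl]
    abel
  obtain ⟨k, hk⟩ := exists_nat_gt (L * (c / 2))
  have hk0 : (0 : ℝ) < k := lt_trans (by positivity) hk
  have hS : ∀ i : ℕ, i ≤ k → S (i / k) := by
    intro i
    induction i with
    | zero => intro _; simpa using hS0
    | succ i ih =>
      intro hi
      have hi' : (i : ℝ) ≤ k := by exact_mod_cast (Nat.le_succ i).trans hi
      rw [Nat.cast_succ, add_div]
      refine hstep _ _ (by positivity) (by positivity) ((div_le_one hk0).2 hi') ?_
        (ih ((Nat.le_succ i).trans hi))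
      rw [one_div, inv_mul_eq_div, mul_div_assoc', div_lt_one hk0]
      exact hk
  have hS1 := hS k le_rfl
  rw [div_self hk0.ne'] at hS1
  simpa [S] using hS1 f

/-- Pseudo-orbits of Lipschitz perturbations are shadowed by orbits. -/
theorem exists_shadowing (hA : IsRobustDichotomy A c M) {L : ℝ}
    (hbound : ∀ (y : ℤ → X) (V η : ℝ), 0 ≤ η → (∀ n, ‖y n‖ ≤ V) →
      IsApproxOrbit A (c / 2) η y → ∀ n, ‖y n‖ ≤ L * η)
    {Φ : ℤ → X → X} (hΦ : IsLipschitzPerturbation A (c / 2) Φ) {x : ℤ → X} {δ : ℝ}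
    (hx : ∀ n, ‖x (n + 1) - Φ n (x n)‖ ≤ δ) :
    ∃ z : ℤ → X, (∀ n, z (n + 1) = Φ n (z n)) ∧ ∀ n, ‖z n - x n‖ ≤ L * δ := by
  obtain ⟨ψ, hψ⟩ := hA.exists_bounded_solution_s10
    (N := fun n u => Φ n (x n + u) - Φ n (x n) - A n u)
    (fun n u v => by
      have h1 := hΦ n (x n + u) (x n + v)
      rw [add_sub_add_left_eq_sub] at h1
      convert h1 using 2
      rw [map_sub]; abel)
    (fun n => by simp)
    (.ofNormedAddCommGroup (fun n => Φ n (x n) - x (n + 1)) continuous_of_discreteTopology δ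
      fun n => by rw [norm_sub_rev]; exact hx n)
  have horb : ∀ n, x (n + 1) + ψ (n + 1) = Φ n (x n + ψ n) := by
    intro n
    rw [hψ, BoundedContinuousFunction.coe_ofNormedAddCommGroup]
    abel
  refine ⟨fun n => x n + ψ n, horb, hbound _ ‖ψ‖ δ ((norm_nonneg _).trans (hx 0))
    (fun n => by simpa using ψ.norm_coe_le_norm n) ?_⟩
  exact hΦ.isApproxOrbit_sub fun n => by simpa [horb, norm_sub_rev] using hx n

/-- Semiconjugacies at bounded distance from the identity are unique. -/
theorem semiconj_unique (hA : IsRobustDichotomy A c M) (Φ : ℤ → X ≃ₜ X) {Ψ : ℤ → X → X}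
    (hΨ : IsLipschitzPerturbation A (c / 2) Ψ) {h k : ℤ → X → X} {V : ℝ}
    (hh : ∀ m x, h (m + 1) (Φ m x) = Ψ m (h m x)) (hk : ∀ m x, k (m + 1) (Φ m x) = Ψ m (k m x))
    (hV : ∀ m x, ‖h m x - x‖ ≤ V) (kV : ∀ m x, ‖k m x - x‖ ≤ V) (m : ℤ) (x : X) :
    h m x = k m x := by
  obtain ⟨H, hH⟩ := exists_flow Φ
  have h1 := hA.orbit_unique hΨ (x := fun n => h n (H n ((H m).symm x)))
    (y := fun n => k n (H n ((H m).symm x))) (V := V + V) (fun n => by rw [hH, hh])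
    (fun n => by rw [hH, hk]) (fun n => by
      rw [← sub_sub_sub_cancel_right _ _ (H n ((H m).symm x))]
      exact (norm_sub_le _ _).trans (add_le_add (hV _ _) (kV _ _))) m
  simpa using h1

/-- Two Lipschitz perturbations at bounded distance are semiconjugate by continuous maps close to
the identity. -/
theorem exists_semiconj (hA : IsRobustDichotomy A c M) {L : ℝ} (hL : 0 < L)
    (hbound : ∀ (y : ℤ → X) (V η : ℝ), 0 ≤ η → (∀ n, ‖y n‖ ≤ V) →
      IsApproxOrbit A (c / 2) η y → ∀ n, ‖y n‖ ≤ L * η)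
    (Φ : ℤ → X ≃ₜ X) {Ψ : ℤ → X → X} (hΨ : IsLipschitzPerturbation A (c / 2) Ψ) {δ : ℝ}
    (hδ : ∀ n x, ‖Φ n x - Ψ n x‖ ≤ δ) :
    ∃ h : ℤ → X → X, (∀ m, Continuous (h m)) ∧ (∀ m x, h (m + 1) (Φ m x) = Ψ m (h m x)) ∧
      ∀ m x, ‖h m x - x‖ ≤ L * δ := by
  have hδ0 : 0 ≤ δ := (norm_nonneg _).trans (hδ 0 0)
  obtain ⟨H, hH⟩ := exists_flow Φ
  have hsh : ∀ m x, ∃ z : ℤ → X, (∀ n, z (n + 1) = Ψ n (z n)) ∧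
      ∀ n, ‖z n - H n ((H m).symm x)‖ ≤ L * δ := fun m x =>
    hA.exists_shadowing hbound hΨ fun n => by rw [hH]; exact hδ _ _
  choose z hz hzb using hsh
  refine ⟨fun m x => z m x m, fun m => ?_, fun m x => ?_, fun m x => by simpa using hzb m x m⟩
  · rw [continuous_iff_continuousAt]
    intro x₀
    rw [Metric.continuousAt_iff']
    intro ε hε
    set V := 1 + (L * δ + L * δ) with hV
    have hV0 : 0 < V := by positivity
    obtain ⟨W, hW⟩ := exists_nat_gt (L * V / ε)
    have hWpos : (0 : ℝ) < W := lt_trans (by positivity) hW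
    have hev : ∀ᶠ x in 𝓝 x₀, ∀ n ∈ Finset.Icc (m - W) (m + W),
        dist (H n ((H m).symm x)) (H n ((H m).symm x₀)) < 1 := by
      rw [Filter.eventually_all_finset]
      intro n _
      have hcont : Continuous fun x => H n ((H m).symm x) :=
        (H n).continuous.comp (H m).symm.continuous
      exact Metric.continuousAt_iff'.1 hcont.continuousAt 1 one_pos
    filter_upwards [hev] with x hx
    obtain ⟨d, hd, hdm, -, hdV⟩ := (hΨ.isApproxOrbit_sub_of_orbit (hz m x)
      (hz m x₀)).exists_cutoff le_rfl (W := W) (by exact_mod_cast hWpos) m (V := V)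
      fun n hn => by
        have h1 := hx n (Finset.mem_Icc.2 (by lia))
        rw [dist_eq_norm] at h1
        have h2 : z m x n - z m x₀ n = (H n ((H m).symm x) - H n ((H m).symm x₀)) +
            ((z m x n - H n ((H m).symm x)) - (z m x₀ n - H n ((H m).symm x₀))) := by abel
        rw [h2]
        exact (norm_add_le _ _).trans (add_le_add h1.le
          ((norm_sub_le _ _).trans (add_le_add (hzb _ _ _) (hzb _ _ _))))
    have h3 := hbound d V _ (by positivity) hdV hd m
    rw [hdm, zero_add] at h3
    rw [dist_eq_norm]
    refine h3.trans_lt ?_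
    rw [div_lt_iff₀ hε] at hW
    rw [mul_div_assoc', div_lt_iff₀ hWpos]
    linarith
  · have hsymm : (H (m + 1)).symm (Φ m x) = (H m).symm x := by
      rw [Homeomorph.symm_apply_eq, hH, Homeomorph.apply_symm_apply]
    rw [← hz]
    refine hA.orbit_unique hΨ (hz (m + 1) (Φ m x)) (hz m x) (V := L * δ + L * δ)
      (fun n => ?_) (m + 1)
    have h1 := hzb (m + 1) (Φ m x) n
    rw [hsymm] at h1
    rw [← sub_sub_sub_cancel_right _ _ (H n ((H m).symm x))]
    exact (norm_sub_le _ _).trans (add_le_add h1 (hzb _ _ _))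

end IsRobustDichotomy

/-- A uniformly bounded sequence of invertible operators with the robustness property satisfies
the quantitative lower bounds of `IsRobustDichotomy`. -/
theorem isRobustDichotomy_of_equiv {A : ℤ → X ≃L[ℝ] X} {c M : ℝ} (hc : 0 < c)
    (hM : ∀ m, ‖(A m : X →L[ℝ] X)‖ ≤ M)
    (hrobust : ∀ B : ℤ → X →L[ℝ] X,
      (∀ m, ‖(A m : X →L[ℝ] X) - B m‖ ≤ c) → ExpDichotomy B) :
    IsRobustDichotomy (fun m => (A m : X →L[ℝ] X)) c M := by
  refine ⟨hc, hM, fun n x hx => ?_, hrobust⟩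
  by_contra! hle
  obtain ⟨φ, u, hS, hSx⟩ := exists_rank_one_approx hc.le le_rfl x _
    (hle.trans_eq (add_zero _).symm)
  have hu : A n x = φ x • u := by simpa [sub_eq_zero] using hSx
  have hφ : φ x ≠ 0 := by
    intro h
    rw [h, zero_smul, map_eq_zero_iff _ (A n).injective] at hu
    exact hx hu
  obtain ⟨y, hy⟩ := (hrobust (fun m => (A m : X →L[ℝ] X) - φ.smulRight u) fun m => by
    simpa using hS).surjective n u
  have hy' : A n y = (1 + φ y) • u := by
    have : A n y - φ y • u = u := hy
    rw [add_smul, one_smul]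
    exact sub_eq_iff_eq_add.1 this
  have h1 : φ x • y = (1 + φ y) • x := by
    apply (A n).injective
    rw [map_smul, map_smul, hu, hy', smul_comm]
  have h2 := congrArg φ h1
  simp only [map_smul, smul_eq_mul] at h2
  apply hφ
  linarith

end Conjugacy

/-- Nonautonomous Grobman–Hartman theorem: for sufficiently small perturbations `g n` of a
hyperbolic linear dynamics, there is a unique sequence of homeomorphisms `h m` conjugating
the perturbed dynamics to the linear one and uniformly close to the identity. -/
theorem nonautonomous_grobman_hartman {X : Type*} [NormedAddCommGroup X]
    [NormedSpace ℝ X] [CompleteSpace X]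
    (A : ℤ → X ≃L[ℝ] X) (M : ℝ) (hM : ∀ m, ‖(A m : X →L[ℝ] X)‖ ≤ M)
    (hED : ExpDichotomy fun m => (A m : X →L[ℝ] X))
    (c : ℝ) (hc : 0 < c)
    (hrobust : ∀ B : ℤ → X →L[ℝ] X,
      (∀ m, ‖(A m : X →L[ℝ] X) - B m‖ ≤ c) → ExpDichotomy B)
    (D r : ℝ) (hD : 0 < D) (hr : 0 < r) :
    ∃ δ > (0 : ℝ), ∃ ε > (0 : ℝ),
      ∀ (g : ℤ → X → X) (g' : ℤ → X → X →L[ℝ] X),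
        (∀ n x, HasFDerivAt (g n) (g' n x) x) →
        (∀ n x, ‖g' n x‖ ≤ c / 2) →
        (∀ n x y, ‖g' n x - g' n y‖ ≤ D * ‖x - y‖ ^ r) →
        (∀ n x, ‖g n x‖ ≤ δ) →
        (∀ n, IsHomeomorph fun x => A n x + g n x) →
        ∃! h : ℤ → X → X,
          (∀ m, IsHomeomorph (h m)) ∧
          (∀ (m : ℤ) (x : X), h (m + 1) (A m x + g m x) = A m (h m x)) ∧
          (∀ (m : ℤ) (x : X), ‖h m x - x‖ ≤ ε) := by
  have hA := isRobustDichotomy_of_equiv hc hM hrobust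
  obtain ⟨L, hL, hbound⟩ := hA.exists_uniform_bound
  refine ⟨1, one_pos, L, hL, fun g g' hg hg' _ hgb hG => ?_⟩
  have hLip : ∀ n x y, ‖g n x - g n y‖ ≤ c / 2 * ‖x - y‖ := fun n x y =>
    convex_univ.norm_image_sub_le_of_norm_hasFDerivWithin_le
      (fun z _ => (hg n z).hasFDerivWithinAt) (fun z _ => hg' n z) (Set.mem_univ y)
      (Set.mem_univ x)
  let G : ℤ → X ≃ₜ X := fun n => (hG n).homeomorph
  let A' : ℤ → X ≃ₜ X := fun n => (A n).toHomeomorph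
  have hGapp : ∀ n x, G n x = A n x + g n x := fun _ _ => rfl
  have hA'app : ∀ n x, A' n x = A n x := fun _ _ => rfl
  have hGpert : IsLipschitzPerturbation (fun m => (A m : X →L[ℝ] X)) (c / 2)
      fun n => G n := by
    intro n x y
    refine le_trans (le_of_eq ?_) (hLip n x y)
    congr 1
    simp only [hGapp, ContinuousLinearEquiv.coe_coe, map_sub]
    abel
  have hApert : IsLipschitzPerturbation (fun m => (A m : X →L[ℝ] X)) (c / 2)
      fun n => A' n := by
    intro n x y
    simp only [hA'app, ContinuousLinearEquiv.coe_coe, map_sub, sub_self, norm_zero]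
    positivity
  obtain ⟨h, hcont, hsemi, hclose⟩ := hA.exists_semiconj hL hbound G hApert (δ := 1)
    fun n x => by simpa [hGapp, hA'app] using hgb n x
  obtain ⟨k, kcont, ksemi, kclose⟩ := hA.exists_semiconj hL hbound A' hGpert (δ := 1)
    fun n x => by simpa [hGapp, hA'app] using hgb n x
  rw [mul_one] at hclose kclose
  have hcomp : ∀ (a b : ℤ → X → X), (∀ m x, ‖a m x - x‖ ≤ L) → (∀ m x, ‖b m x - x‖ ≤ L) →
      ∀ m x, ‖a m (b m x) - x‖ ≤ L + L := by
    intro a b ha hb m x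
    rw [← sub_add_sub_cancel _ (b m x)]
    exact (norm_add_le _ _).trans (add_le_add (ha _ _) (hb _ _))
  have hid : ∀ (m : ℤ) (x : X), ‖x - x‖ ≤ L + L := fun m x => by simp; positivity
  have hkh : ∀ m x, k m (h m x) = x :=
    hA.semiconj_unique G hGpert (h := fun m x => k m (h m x)) (k := fun _ x => x)
      (fun m x => by rw [hsemi, ksemi]) (fun _ _ => rfl) (hcomp k h kclose hclose) hid
  have hhk : ∀ m x, h m (k m x) = x :=
    hA.semiconj_unique A' hApert (h := fun m x => h m (k m x)) (k := fun _ x => x)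
      (fun m x => by rw [ksemi, hsemi]) (fun _ _ => rfl) (hcomp h k hclose kclose) hid
  refine ⟨h, ⟨fun m => ?_, hsemi, hclose⟩, fun l ⟨_, lsemi, lclose⟩ => ?_⟩
  · exact (Homeomorph.mk ⟨h m, k m, hkh m, hhk m⟩ (hcont m) (kcont m)).isHomeomorph
  · funext m x
    exact hA.semiconj_unique G hApert lsemi hsemi lclose hclose m x
end
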